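/- arXiv:1402.1748 — 2 statements merged into one kernel-verified Lean document; each statement's English description precedes it below -/
import Mathlib

section
/- (First variation of Huisken's two-point function at an interior minimum) Let F : S¹ → ℝ² be a smooth embedded closed curve of length L, with intrinsic distance d(x,y) (the smaller of the arclengths of the two arcs joining x and y). Fix α > 0 and define Z_α(x,y) = α |F(x) − F(y)| − L sin(π d(x,y)/L). Suppose Z_α attains a local minimum at a pair (x̄, ȳ) with x̄ ≠ ȳ and 0 < d(x̄,ȳ) < L/2, and let u and v denote the unit tangent vectors to the curve at x̄ and ȳ respectively, each oriented in the direction of increasing intrinsic distance from the other point (i.e. pointing away from the minimizing arc). Then α ⟨F(x̄) − F(ȳ), u⟩ = π |F(x̄) − F(ȳ)| cos(π d(x̄,ȳ)/L) and α ⟨F(x̄) − F(ȳ), v⟩ = −π |F(x̄) − F(ȳ)| cos(π d(x̄,ȳ)/L); in particular ⟨F(x̄) − F(ȳ), u + v⟩ = 0. -/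
noncomputable section
open Real Set
open scoped RealInnerProductSpace

/-- The plane `ℝ²`. -/
abbrev E2 := EuclideanSpace ℝ (Fin 2)

/-- The length of a closed curve `F : ℝ → ℝ²` parametrized by `S¹ = ℝ/2πℤ`. -/
def len (F : ℝ → E2) : ℝ := ∫ u in (0:ℝ)..(2*π), ‖deriv F u‖

/-- The intrinsic distance `d(x,y)`: the infimum of the arclengths of the arcs of
the closed curve `F` joining `x` to `y` (over all representatives of `y` mod `2π`). -/
def idist (F : ℝ → E2) (x y : ℝ) : ℝ :=
  sInf {d : ℝ | ∃ n : ℤ, d = |∫ u in x..(y + 2*π*n), ‖deriv F u‖|}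

theorem aux_crit (G : ℝ → E2) (D : ℝ → ℝ) (w : E2) (s α L x₀ : ℝ) (hL : 0 < L)
    (hG : HasDerivAt G w x₀) (hD : HasDerivAt D s x₀) (h0 : G x₀ ≠ 0)
    (hmin : IsLocalMin (fun x => α * ‖G x‖ - L * sin (π * D x / L)) x₀) :
    α * ⟪G x₀, w⟫ = π * ‖G x₀‖ * cos (π * D x₀ / L) * s := by
  have hn : 0 < ‖G x₀‖ := norm_pos_iff.mpr h0
  have h1 : HasDerivAt (fun x => ‖G x‖) (⟪G x₀, w⟫ / ‖G x₀‖) x₀ := by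
    have h2 := (hG.norm_sq).sqrt (by positivity)
    have h3 : (fun x => √(‖G x‖ ^ 2)) = fun x => ‖G x‖ := by
      funext x
      exact Real.sqrt_sq (norm_nonneg _)
    rw [h3, Real.sqrt_sq hn.le] at h2
    convert h2 using 1
    field_simp
  have h4 : HasDerivAt (fun x => L * sin (π * D x / L))
      (L * (cos (π * D x₀ / L) * (π * s / L))) x₀ :=
    (((hD.const_mul π).div_const L).sin).const_mul L
  have h5 := hmin.hasDerivAt_eq_zero ((h1.const_mul α).sub h4)
  field_simp at h5
  linarith

theorem aux_inf (L t : ℝ) (hL : 0 < L) (m : ℤ) (hm : |t + m * L| ≤ L / 2) :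
    sInf {d : ℝ | ∃ n : ℤ, d = |t + n * L|} = |t + m * L| := by
  apply IsLeast.csInf_eq
  refine ⟨⟨m, rfl⟩, ?_⟩
  rintro d ⟨n, rfl⟩
  by_cases hnm : n = m
  · rw [hnm]
  · have h1 : (1 : ℝ) ≤ |(n : ℝ) - m| := by
      have : (1 : ℤ) ≤ |n - m| := Int.one_le_abs (sub_ne_zero.mpr hnm)
      exact_mod_cast this
    have h2 : |((n : ℝ) - m) * L| = |(n : ℝ) - m| * L := by
      rw [abs_mul, abs_of_pos hL]
    have h3 : ((n : ℝ) - m) * L = (t + n * L) - (t + m * L) := by ring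
    have h4 := abs_sub (t + n * L) (t + m * L)
    rw [← h3, h2] at h4
    nlinarith

theorem aux_ex (L t : ℝ) (hL : 0 < L) : ∃ m : ℤ, |t + m * L| ≤ L / 2 := by
  refine ⟨-round (t / L), ?_⟩
  have h := abs_sub_round (t / L)
  have h1 : t + ((-round (t / L) : ℤ) : ℝ) * L = (t / L - round (t / L)) * L := by
    push_cast
    field_simp
    ring
  rw [h1, abs_mul, abs_of_pos hL]
  nlinarith

theorem aux_abs (f : ℝ → ℝ) (f' σ x : ℝ) (hf : HasDerivAt f f' x)
    (hσ : (σ = 1 ∧ 0 < f x) ∨ (σ = -1 ∧ f x < 0)) :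
    HasDerivAt (fun z => |f z|) (σ * f') x := by
  rcases hσ with ⟨rfl, h⟩ | ⟨rfl, h⟩
  · rw [one_mul]
    refine hf.congr_of_eventuallyEq ?_
    filter_upwards [hf.continuousAt.eventually (lt_mem_nhds h)] with z hz
    exact abs_of_pos hz
  · rw [neg_one_mul]
    refine hf.neg.congr_of_eventuallyEq ?_
    filter_upwards [hf.continuousAt.eventually (gt_mem_nhds h)] with z hz
    exact abs_of_neg hz

theorem aux_S (F : ℝ → E2) (hsm : ContDiff ℝ (⊤ : ℕ∞) F)
    (hper : ∀ x : ℝ, F (x + 2*π) = F x) (himm : ∀ x : ℝ, deriv F x ≠ 0) :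
    0 < len F ∧ ∃ S : ℝ → ℝ, (∀ x, HasDerivAt S ‖deriv F x‖ x) ∧
      ∀ x y, idist F x y = sInf {d : ℝ | ∃ n : ℤ, d = |(S y - S x) + n * len F|} := by
  have hc : Continuous (fun x => ‖deriv F x‖) :=
    (hsm.continuous_deriv (by simp)).norm
  have hp : Function.Periodic (fun x => ‖deriv F x‖) (2 * π) := by
    intro x
    have h : deriv (fun z => F (z + 2 * π)) x = deriv F (x + 2 * π) :=
      deriv_comp_add_const F (2 * π) x
    have h2 : (fun z => F (z + 2 * π)) = F := funext hper
    rw [h2] at h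
    simp only [h]
  have hi : ∀ a b, IntervalIntegrable (fun x => ‖deriv F x‖) MeasureTheory.volume a b :=
    fun a b => hc.intervalIntegrable a b
  refine ⟨?_, fun x => ∫ u in (0:ℝ)..x, ‖deriv F u‖, ?_, ?_⟩
  · exact intervalIntegral.intervalIntegral_pos_of_pos (hi _ _)
      (fun x => norm_pos_iff.mpr (himm x)) (by positivity)
  · intro x
    exact hc.integral_hasStrictDerivAt 0 x |>.hasDerivAt
  · intro x y
    unfold idist
    congr 1
    ext d
    have key : ∀ n : ℤ, (∫ u in x..(y + 2*π*n), ‖deriv F u‖) =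
        ((∫ u in (0:ℝ)..y, ‖deriv F u‖) - ∫ u in (0:ℝ)..x, ‖deriv F u‖) + n * len F := by
      intro n
      have h1 := hp.intervalIntegral_add_zsmul_eq n y hi
      rw [← intervalIntegral.integral_add_adjacent_intervals (hi x y) (hi y _),
        ← intervalIntegral.integral_interval_sub_left (hi 0 y) (hi 0 x)]
      have h2 : y + 2 * π * n = y + n • (2 * π) := by
        rw [zsmul_eq_mul]; ring
      rw [h2, h1, zsmul_eq_mul]
      congr 2
      have := hp.intervalIntegral_add_eq y 0
      rw [zero_add] at this
      exact this
    simp only [Set.mem_ofPred_eq, key]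

/-- **First variation of Huisken's two-point function at an interior minimum.**
If `Z_α(x,y) = α|F(x) - F(y)| - L sin(π d(x,y)/L)` attains a local minimum at a pair
`(x₀,y₀)` with `x₀ ≠ y₀` and `0 < d(x₀,y₀) < L/2`, and `u`, `v` are the unit tangent
vectors at `x₀`, `y₀` oriented in the direction of increasing intrinsic distance from
the other point, then
`α⟨F(x₀) - F(y₀), u⟩ = π|F(x₀) - F(y₀)| cos(π d(x₀,y₀)/L)`,
`α⟨F(x₀) - F(y₀), v⟩ = -π|F(x₀) - F(y₀)| cos(π d(x₀,y₀)/L)`,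
and in particular `⟨F(x₀) - F(y₀), u + v⟩ = 0`. -/
theorem first_variation_of_two_point_function_at_min
    (F : ℝ → E2) (hsm : ContDiff ℝ (⊤ : ℕ∞) F)
    (hper : ∀ x : ℝ, F (x + 2*π) = F x)
    (himm : ∀ x : ℝ, deriv F x ≠ 0)
    (hemb : ∀ x y : ℝ, F x = F y → ∃ n : ℤ, y = x + 2*π*n)
    (L : ℝ) (hL : L = len F)
    (α : ℝ) (hα : 0 < α)
    (Z : ℝ → ℝ → ℝ)
    (hZ : ∀ x y : ℝ, Z x y = α * ‖F x - F y‖ - L * sin (π * idist F x y / L))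
    (x₀ y₀ : ℝ) (hne : ¬ ∃ n : ℤ, y₀ = x₀ + 2*π*n)
    (hd0 : 0 < idist F x₀ y₀) (hdL : idist F x₀ y₀ < L / 2)
    (hmin : IsLocalMin (fun p : ℝ × ℝ => Z p.1 p.2) (x₀, y₀))
    (u v : E2) (εx εy : ℝ)
    (hεx : εx = 1 ∨ εx = -1) (hεy : εy = 1 ∨ εy = -1)
    (hu : u = εx • (‖deriv F x₀‖⁻¹ • deriv F x₀))
    (hv : v = εy • (‖deriv F y₀‖⁻¹ • deriv F y₀))
    -- `u` (resp. `v`) points in the direction in which the intrinsic distance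
    -- to the other point increases:
    (hu' : 0 < εx * deriv (fun x => idist F x y₀) x₀)
    (hv' : 0 < εy * deriv (fun y => idist F x₀ y) y₀) :
    α * ⟪F x₀ - F y₀, u⟫ = π * ‖F x₀ - F y₀‖ * cos (π * idist F x₀ y₀ / L) ∧
    α * ⟪F x₀ - F y₀, v⟫ = -(π * ‖F x₀ - F y₀‖ * cos (π * idist F x₀ y₀ / L)) ∧
    ⟪F x₀ - F y₀, u + v⟫ = 0 := by
  obtain ⟨hLp, S, hS, hid⟩ := aux_S F hsm hper himm
  rw [← hL] at hLp hid
  obtain ⟨m, hm⟩ := aux_ex L (S y₀ - S x₀) hLp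
  have e0 : idist F x₀ y₀ = |(S y₀ - S x₀) + m * L| := by
    rw [hid, aux_inf L _ hLp m hm]
  have hlt : |(S y₀ - S x₀) + m * L| < L / 2 := e0 ▸ hdL
  have hpos : 0 < |(S y₀ - S x₀) + m * L| := e0 ▸ hd0
  obtain ⟨σ, hσ⟩ : ∃ σ : ℝ, (σ = 1 ∧ 0 < (S y₀ - S x₀) + m * L) ∨
      (σ = -1 ∧ (S y₀ - S x₀) + m * L < 0) := by
    rcases lt_or_gt_of_ne (abs_pos.mp hpos) with h | h
    · exact ⟨-1, Or.inr ⟨rfl, h⟩⟩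
    · exact ⟨1, Or.inl ⟨rfl, h⟩⟩
  have hfx : HasDerivAt (fun x => (S y₀ - S x) + m * L) (-‖deriv F x₀‖) x₀ :=
    ((hS x₀).const_sub _).add_const _
  have hfy : HasDerivAt (fun y => (S y - S x₀) + m * L) (‖deriv F y₀‖) y₀ :=
    ((hS y₀).sub_const _).add_const _
  have hDx : HasDerivAt (fun x => idist F x y₀) (σ * (-‖deriv F x₀‖)) x₀ := by
    refine (aux_abs _ _ σ x₀ hfx hσ).congr_of_eventuallyEq ?_
    filter_upwards [hfx.continuousAt.abs.eventually (gt_mem_nhds hlt)] with z hz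
    rw [hid, aux_inf L _ hLp m (le_of_lt hz)]
  have hDy : HasDerivAt (fun y => idist F x₀ y) (σ * ‖deriv F y₀‖) y₀ := by
    refine (aux_abs _ _ σ y₀ hfy hσ).congr_of_eventuallyEq ?_
    filter_upwards [hfy.continuousAt.abs.eventually (gt_mem_nhds hlt)] with z hz
    rw [hid, aux_inf L _ hLp m (le_of_lt hz)]
  have hnx : 0 < ‖deriv F x₀‖ := norm_pos_iff.mpr (himm x₀)
  have hny : 0 < ‖deriv F y₀‖ := norm_pos_iff.mpr (himm y₀)
  have hF : ∀ x, HasDerivAt F (deriv F x) x := fun x =>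
    (hsm.differentiable (by simp) x).hasDerivAt
  have hG0 : F x₀ - F y₀ ≠ 0 := fun h => hne (hemb _ _ (sub_eq_zero.mp h))
  have hmx : IsLocalMin (fun x => α * ‖F x - F y₀‖ - L * sin (π * idist F x y₀ / L)) x₀ := by
    have hc : ContinuousAt (fun x : ℝ => (x, y₀)) x₀ := by fun_prop
    have h := hc.eventually hmin
    simp only [hZ] at h
    exact h
  have hmy : IsLocalMin (fun y => α * ‖F x₀ - F y‖ - L * sin (π * idist F x₀ y / L)) y₀ := by
    have hc : ContinuousAt (fun y : ℝ => (x₀, y)) y₀ := by fun_prop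
    have h := hc.eventually hmin
    simp only [hZ] at h
    exact h
  have cx := aux_crit (fun x => F x - F y₀) (fun x => idist F x y₀) _ _ α L x₀ hLp
    ((hF x₀).sub_const _) hDx hG0 hmx
  have cy := aux_crit (fun y => F x₀ - F y) (fun y => idist F x₀ y) _ _ α L y₀ hLp
    ((hF y₀).const_sub _) hDy hG0 hmy
  rw [hDx.deriv] at hu'
  rw [hDy.deriv] at hv'
  simp only [inner_neg_right] at cx cy
  have hσ1 : σ = 1 ∨ σ = -1 := hσ.imp And.left And.left
  have ex : εx = -σ := by
    rcases hεx with rfl | rfl <;> rcases hσ1 with rfl | rfl <;> first | (norm_num; done) | (exfalso; linarith)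
  have ey : εy = σ := by
    rcases hεy with rfl | rfl <;> rcases hσ1 with rfl | rfl <;> first | (norm_num; done) | (exfalso; linarith)
  have hσ2 : σ * σ = 1 := by rcases hσ1 with rfl | rfl <;> norm_num
  have A : α * ⟪F x₀ - F y₀, u⟫ = π * ‖F x₀ - F y₀‖ * cos (π * idist F x₀ y₀ / L) := by
    rw [hu, ex, inner_smul_right, inner_smul_right]
    calc _ = (-σ) * ‖deriv F x₀‖⁻¹ * (α * ⟪F x₀ - F y₀, deriv F x₀⟫) := by ring
      _ = (σ * σ) * (‖deriv F x₀‖⁻¹ * ‖deriv F x₀‖) *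
          (π * ‖F x₀ - F y₀‖ * cos (π * idist F x₀ y₀ / L)) := by rw [cx]; ring
      _ = _ := by rw [hσ2, inv_mul_cancel₀ hnx.ne']; ring
  have B : α * ⟪F x₀ - F y₀, v⟫ = -(π * ‖F x₀ - F y₀‖ * cos (π * idist F x₀ y₀ / L)) := by
    rw [hv, ey, inner_smul_right, inner_smul_right]
    calc _ = (-σ) * ‖deriv F y₀‖⁻¹ * (α * -⟪F x₀ - F y₀, deriv F y₀⟫) := by ring
      _ = -((σ * σ) * (‖deriv F y₀‖⁻¹ * ‖deriv F y₀‖) *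
          (π * ‖F x₀ - F y₀‖ * cos (π * idist F x₀ y₀ / L))) := by rw [cy]; ring
      _ = _ := by rw [hσ2, inv_mul_cancel₀ hny.ne']; ring
  refine ⟨A, B, ?_⟩
  have hC : α * ⟪F x₀ - F y₀, u + v⟫ = 0 := by
    rw [inner_add_right, mul_add, A, B]; ring
  exact (mul_eq_zero.mp hC).resolve_left hα.ne'
end
end

section
/- (Lawson's conjecture, proved by Brendle) Let Λ ⊂ ℝ² be a lattice spanned by two ℝ-linearly independent vectors, and let F : ℝ² → ℝ⁴ be a smooth Λ-periodic map taking values in the unit sphere S³ = {x ∈ ℝ⁴ : |x| = 1} such that: (i) F is a conformal immersion, i.e. |∂F/∂s| = |∂F/∂t| > 0 and ⟨∂F/∂s, ∂F/∂t⟩ = 0 at every point; (ii) F satisfies the minimal surface (harmonic map) equation ΔF + (|∂F/∂s|² + |∂F/∂t|²) F = 0, where ΔF = ∂²F/∂s² + ∂²F/∂t²; and (iii) F is embedded, i.e. F(p) = F(q) implies p − q ∈ Λ. Then F is congruent to the Clifford torus: there exists an orthogonal transformation Q ∈ O(4) such that F(ℝ²) = Q · {x ∈ S³ : x₁² + x₂²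 = x₃² + x₄² = 1/2}. -/
noncomputable section
open Real Set
open scoped RealInnerProductSpace

/-- Euclidean four-space `ℝ⁴`, the ambient space of `S³`. -/
abbrev E4 := EuclideanSpace ℝ (Fin 4)

/-- The partial derivative `∂F/∂s`. -/
def pds (F : ℝ → ℝ → E4) (s t : ℝ) : E4 := deriv (fun u => F u t) s

/-- The partial derivative `∂F/∂t`. -/
def pdt (F : ℝ → ℝ → E4) (s t : ℝ) : E4 := deriv (fun v => F s v) t

/-- The Laplacian `ΔF = ∂²F/∂s² + ∂²F/∂t²`. -/
def lap (F : ℝ → ℝ → E4) (s t : ℝ) : E4 :=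
  deriv (fun u => pds F u t) s + deriv (fun v => pdt F s v) t

/-- The Clifford torus `{x ∈ S³ : x₁² + x₂² = x₃² + x₄² = 1/2}` as a subset of `ℝ⁴`. -/
def cliffordTorus : Set E4 :=
  {x : E4 | x 0 ^ 2 + x 1 ^ 2 = 1/2 ∧ x 2 ^ 2 + x 3 ^ 2 = 1/2}

section part1

/-! ### Calculus on the plane -/

abbrev R2 := ℝ × ℝ
abbrev Sm {V : Type*} [NormedAddCommGroup V] [NormedSpace ℝ V] (f : R2 → V) : Prop :=
  ContDiff ℝ ((⊤ : ℕ∞) : WithTop ℕ∞) f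

section calc1
variable {V : Type*} [NormedAddCommGroup V] [NormedSpace ℝ V]

def dd (v : R2) (f : R2 → V) (p : R2) : V := fderiv ℝ f p v

abbrev e1 : R2 := (1, 0)
abbrev e2 : R2 := (0, 1)

lemma Sm.diff {f : R2 → V} (hf : Sm f) : Differentiable ℝ f :=
  hf.differentiable (by simp)

lemma Sm.dd {f : R2 → V} (hf : Sm f) (v : R2) : Sm (dd v f) := by
  have : ContDiff ℝ ((⊤ : ℕ∞) : WithTop ℕ∞) (fderiv ℝ f) :=
    hf.fderiv_right (by simp)
  exact this.clm_apply contDiff_const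

lemma dd_comm {f : R2 → V} (hf : Sm f) (v w : R2) : dd v (dd w f) = dd w (dd v f) := by
  have h1 : Differentiable ℝ (fderiv ℝ f) := by
    have : ContDiff ℝ ((⊤ : ℕ∞) : WithTop ℕ∞) (fderiv ℝ f) :=
      hf.fderiv_right (by simp)
    exact this.differentiable (by simp)
  have key : ∀ a b p, dd a (dd b f) p = fderiv ℝ (fderiv ℝ f) p a b := by
    intro a b p
    have := (h1 p).hasFDerivAt.clm_apply (hasFDerivAt_const b p)
    have e : dd b f = fun q => fderiv ℝ f q b := rfl
    rw [dd, e, this.fderiv]; simp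
  funext p
  rw [key, key]
  exact second_derivative_symmetric (fun y => (hf.diff y).hasFDerivAt) (h1 p).hasFDerivAt v w

lemma dd_const (v : R2) (c : V) (p : R2) : dd v (fun _ => c) p = 0 := by
  simp [dd]

lemma dd_add {f g : R2 → V} (hf : Sm f) (hg : Sm g) (v p : R2) :
    dd v (fun q => f q + g q) p = dd v f p + dd v g p := by
  rw [dd, fderiv_fun_add (hf.diff p) (hg.diff p)]; rfl

lemma dd_neg {f : R2 → V} (v p : R2) :
    dd v (fun q => - f q) p = - dd v f p := by
  rw [dd, fderiv_fun_neg]; rfl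

lemma dd_smul {c : R2 → ℝ} {g : R2 → V} (hc : Sm c) (hg : Sm g) (v p : R2) :
    dd v (fun q => c q • g q) p = c p • dd v g p + dd v c p • g p := by
  rw [dd, fderiv_fun_smul (hc.diff p) (hg.diff p)]; simp [dd]

lemma dd_mul {f g : R2 → ℝ} (hf : Sm f) (hg : Sm g) (v p : R2) :
    dd v (fun q => f q * g q) p = f p * dd v g p + dd v f p * g p := by
  have := dd_smul hf hg v p
  simpa using this

lemma dd_inv {f : R2 → ℝ} (hf : Sm f) (v p : R2) (h : f p ≠ 0) :
    dd v (fun q => (f q)⁻¹) p = - dd v f p / (f p)^2 := by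
  have := ((hasDerivAt_inv h).comp_hasFDerivAt p (hf.diff p).hasFDerivAt).fderiv
  have e : (fun q => (f q)⁻¹) = (fun y => y⁻¹) ∘ f := rfl
  rw [dd, e, this]; simp [dd]; field_simp

lemma dd_comp {f : R2 → ℝ} {φ : ℝ → ℝ} {φ' : ℝ} (hf : Sm f) (v p : R2) (h : HasDerivAt φ φ' (f p)) :
    dd v (fun q => φ (f q)) p = φ' * dd v f p := by
  have := (h.comp_hasFDerivAt p (hf.diff p).hasFDerivAt).fderiv
  have e : (fun q => φ (f q)) = φ ∘ f := rfl
  rw [dd, e, this]; simp [dd]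

lemma dd_split (f : R2 → V) (v p : R2) : dd v f p = v.1 • dd e1 f p + v.2 • dd e2 f p := by
  have : v = v.1 • e1 + v.2 • e2 := by ext <;> simp
  conv_lhs => rw [this, dd, map_add, map_smul, map_smul]
  rfl

lemma dd_shift (f : R2 → V) (l : R2) (h : ∀ r, f (r + l) = f r) (v p : R2) :
    dd v f (p + l) = dd v f p := by
  have e : (fun r => f (r + l)) = f := funext h
  conv_rhs => rw [dd, ← e]
  rw [fderiv_comp_add_right]; rfl

lemma dd_line {f : R2 → V} (hf : Sm f) (p v : R2) (τ : ℝ) :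
    HasDerivAt (fun τ : ℝ => f (p + τ • v)) (dd v f (p + τ • v)) τ := by
  have h1 : HasDerivAt (fun τ : ℝ => p + τ • v) v τ := by
    simpa using ((hasDerivAt_id τ).smul_const v).const_add p
  exact (hf.diff (p + τ • v)).hasFDerivAt.comp_hasDerivAt τ h1

lemma dd_clm (L : R2 →L[ℝ] R2) {f : R2 → V} (hf : Sm f) (v : R2) :
    dd v (fun q => f (L q)) = fun p => dd (L v) f (L p) := by
  funext p
  have := ((hf.diff (L p)).hasFDerivAt.comp p L.hasFDerivAt).fderiv
  have e : (fun q => f (L q)) = f ∘ L := rfl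
  rw [dd, e, this]; rfl

lemma dd_eq_const {f g : R2 → V} (h : ∀ p, f p = g p) (v p : R2) : dd v f p = dd v g p := by
  rw [funext h]

lemma dd_const_of {f : R2 → V} {c : V} (h : ∀ p, f p = c) (v p : R2) : dd v f p = 0 := by
  rw [dd_eq_const h, dd_const]

lemma dd_lin (f : R2 → V) (a b : ℝ) (v w p : R2) :
    dd (a • v + b • w) f p = a • dd v f p + b • dd w f p := by simp [dd]

end calc1

section calc2
variable {H : Type*} [NormedAddCommGroup H] [InnerProductSpace ℝ H]

lemma dd_inner {f g : R2 → H} (hf : Sm f) (hg : Sm g) (v p : R2) :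
    dd v (fun q => ⟪f q, g q⟫) p = ⟪dd v f p, g p⟫ + ⟪f p, dd v g p⟫ := by
  rw [dd, fderiv_inner_apply ℝ (hf.diff p) (hg.diff p)]; simp [dd]; ring
end calc2

/-- second-order necessary condition -/
lemma second_deriv_nonneg {f f' : ℝ → ℝ} {c : ℝ} (h1 : ∀ τ, HasDerivAt f (f' τ) τ)
    (h2 : HasDerivAt f' c 0) (hmin : ∀ τ, f 0 ≤ f τ) : f' 0 = 0 ∧ 0 ≤ c := by
  have h0 : f' 0 = 0 :=
    IsLocalMin.hasDerivAt_eq_zero (Filter.Eventually.of_forall hmin) (h1 0)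
  refine ⟨h0, ?_⟩
  by_contra hc
  push Not at hc
  have e1 : deriv f = f' := funext fun τ => (h1 τ).deriv
  have hmax := isLocalMax_of_deriv_deriv_neg (f := f) (x₀ := 0)
    (by rw [e1, h2.deriv]; exact hc) (by rw [e1, h0]) (h1 0).continuousAt
  have hloc : ∀ᶠ τ in nhds (0:ℝ), f τ = f 0 := by
    filter_upwards [hmax] with τ hτ
    exact le_antisymm hτ (hmin τ)
  have hz : ∀ᶠ τ in nhds (0:ℝ), f' τ = 0 := by
    filter_upwards [hloc.eventually_nhds] with τ hτ
    have : HasDerivAt f 0 τ := (hasDerivAt_const τ (f 0)).congr_of_eventuallyEq hτ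
    exact (h1 τ).unique this
  have : HasDerivAt f' 0 0 := (hasDerivAt_const (0:ℝ) (0:ℝ)).congr_of_eventuallyEq hz
  have := h2.unique this
  linarith

/-- Taylor: convex with zero first-order data is nonneg. -/
lemma nonneg_of_second {f f' f'' : ℝ → ℝ} (h1 : ∀ τ, HasDerivAt f (f' τ) τ)
    (h2 : ∀ τ, HasDerivAt f' (f'' τ) τ) (f0 : f 0 = 0) (f0' : f' 0 = 0)
    (hpos : ∀ τ ∈ Icc (0:ℝ) 1, 0 ≤ f'' τ) : 0 ≤ f 1 := by
  have m1 : MonotoneOn f' (Icc 0 1) := by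
    apply monotoneOn_of_hasDerivWithinAt_nonneg (convex_Icc 0 1) (f' := f'')
    · exact fun τ _ => (h2 τ).continuousAt.continuousWithinAt
    · exact fun τ _ => (h2 τ).hasDerivWithinAt
    · intro τ hτ; exact hpos τ (interior_subset hτ)
  have m2 : MonotoneOn f (Icc 0 1) := by
    apply monotoneOn_of_hasDerivWithinAt_nonneg (convex_Icc 0 1) (f' := f')
    · exact fun τ _ => (h1 τ).continuousAt.continuousWithinAt
    · exact fun τ _ => (h1 τ).hasDerivWithinAt
    · intro τ hτ
      have hτ' := interior_subset hτ
      have := m1 (by simp) hτ' hτ'.1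
      linarith
  have := m2 (by simp : (0:ℝ) ∈ Icc (0:ℝ) 1) (by simp : (1:ℝ) ∈ Icc (0:ℝ) 1) zero_le_one
  linarith

/-- third-order necessary condition -/
lemma third_deriv_zero {f f' f'' : ℝ → ℝ} {c : ℝ} (h1 : ∀ τ, HasDerivAt f (f' τ) τ)
    (h2 : ∀ τ, HasDerivAt f' (f'' τ) τ) (h3 : HasDerivAt f'' c 0)
    (f0 : f 0 = 0) (f0' : f' 0 = 0) (f0'' : f'' 0 = 0)
    (hpos : ∀ τ, 0 ≤ f τ) : c = 0 := by
  -- it suffices to rule out negative `c` for both `f` and its reflection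
  have key : ∀ (g g' g'' : ℝ → ℝ) (d : ℝ), (∀ τ, HasDerivAt g (g' τ) τ) →
      (∀ τ, HasDerivAt g' (g'' τ) τ) → HasDerivAt g'' d 0 → g 0 = 0 → g' 0 = 0 → g'' 0 = 0 →
      (∀ τ, 0 ≤ g τ) → 0 ≤ d := by
    intro g g' g'' d k1 k2 k3 g0 g0' g0'' gp
    by_contra hd
    push Not at hd
    have hs := hasDerivAt_iff_tendsto_slope.1 k3
    have hneg : ∀ᶠ τ in nhdsWithin (0:ℝ) {0}ᶜ, slope g'' 0 τ < 0 := hs.eventually (gt_mem_nhds hd)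
    obtain ⟨δ, hδ, hball⟩ := Metric.mem_nhdsWithin_iff.1 hneg
    have hlt : ∀ τ ∈ Ioo (0:ℝ) δ, g'' τ < 0 := by
      intro τ hτ
      have : slope g'' 0 τ < 0 := hball ⟨by simp [abs_of_pos hτ.1, hτ.2], by simpa using hτ.1.ne'⟩
      rw [slope_def_field, g0''] at this
      simp only [sub_zero] at this
      by_contra hcon
      push Not at hcon
      exact absurd (div_nonneg hcon hτ.1.le) (not_le.2 this)
    have a1 : StrictAntiOn g' (Icc 0 (δ/2)) := by
      apply strictAntiOn_of_deriv_neg (convex_Icc _ _)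
      · exact fun τ _ => (k2 τ).continuousAt.continuousWithinAt
      · intro τ hτ
        rw [interior_Icc] at hτ
        rw [(k2 τ).deriv]; exact hlt τ ⟨hτ.1, by linarith [hτ.2]⟩
    have a2 : StrictAntiOn g (Icc 0 (δ/2)) := by
      apply strictAntiOn_of_deriv_neg (convex_Icc _ _)
      · exact fun τ _ => (k1 τ).continuousAt.continuousWithinAt
      · intro τ hτ
        rw [interior_Icc] at hτ
        rw [(k1 τ).deriv, ← g0']
        exact a1 ⟨le_rfl, by linarith⟩ ⟨hτ.1.le, hτ.2.le⟩ hτ.1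
    have := a2 ⟨le_rfl, by linarith⟩ ⟨by linarith, le_rfl⟩ (by linarith : (0:ℝ) < δ/2)
    linarith [gp (δ/2)]
  have A := key f f' f'' c h1 h2 h3 f0 f0' f0'' hpos
  have neg : ∀ τ : ℝ, HasDerivAt (fun x : ℝ => -x) (-1) τ := fun τ => hasDerivAt_neg τ
  have B := key (fun τ => f (-τ)) (fun τ => - f' (-τ)) (fun τ => f'' (-τ)) (-c)
    (fun τ => by simpa [Function.comp_def] using (h1 (-τ)).comp τ (neg τ))
    (fun τ => by simpa [Function.comp_def] using ((h2 (-τ)).comp τ (neg τ)).fun_neg)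
    (by
      have h3' : HasDerivAt f'' c (-0) := by simpa using h3
      simpa [Function.comp_def] using h3'.comp 0 (neg 0))
    (by simpa using f0) (by simpa using f0') (by simpa using f0'') (fun τ => hpos _)
  linarith

end part1

section part2

/-! ### The normalized surface data -/

def q2 (x p : R2) : ℝ := (x.1 - p.1)^2 + (x.2 - p.2)^2

lemma frame_parseval {P X Y N : E4} {E : ℝ} (hE : 0 < E) (PP : ⟪P, P⟫ = 1) (NN : ⟪N, N⟫ = 1)
    (XX : ⟪X, X⟫ = E) (YY : ⟪Y, Y⟫ = E) (PN : ⟪P, N⟫ = 0) (PX : ⟪P, X⟫ = 0) (PY : ⟪P, Y⟫ = 0)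
    (NX : ⟪N, X⟫ = 0) (NY : ⟪N, Y⟫ = 0) (XY : ⟪X, Y⟫ = 0) (u v : E4) :
    ⟪u, v⟫ = ⟪u, P⟫ * ⟪v, P⟫ + ⟪u, N⟫ * ⟪v, N⟫ + (⟪u, X⟫ * ⟪v, X⟫ + ⟪u, Y⟫ * ⟪v, Y⟫) / E := by
  set r := (√E)⁻¹ with hr
  have hs : 0 < √E := Real.sqrt_pos.2 hE
  have hr2 : r * r = E⁻¹ := by rw [hr, ← mul_inv, Real.mul_self_sqrt hE.le]
  have hrE : r * r * E = 1 := by rw [hr2]; field_simp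
  have NP : ⟪N, P⟫ = 0 := by rw [real_inner_comm]; exact PN
  have XP : ⟪X, P⟫ = 0 := by rw [real_inner_comm]; exact PX
  have YP : ⟪Y, P⟫ = 0 := by rw [real_inner_comm]; exact PY
  have XN : ⟪X, N⟫ = 0 := by rw [real_inner_comm]; exact NX
  have YN : ⟪Y, N⟫ = 0 := by rw [real_inner_comm]; exact NY
  have YX : ⟪Y, X⟫ = 0 := by rw [real_inner_comm]; exact XY
  have ho : Orthonormal ℝ ![P, N, r • X, r • Y] := by
    rw [orthonormal_iff_ite]
    intro i j
    fin_cases i <;> fin_cases j <;>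
      simp [inner_smul_left, inner_smul_right, PN, PX, PY, NX, NY, XY, NP, XP, YP, XN, YN, YX,
        PP, NN, XX, YY, -inner_self_eq_norm_sq_to_K] <;> linarith
  have hspan : ⊤ ≤ Submodule.span ℝ (range ![P, N, r • X, r • Y]) := by
    rw [ho.linearIndependent.span_eq_top_of_card_eq_finrank (by simp)]
  let b := OrthonormalBasis.mk ho hspan
  have := b.sum_inner_mul_inner u v
  rw [← this]
  simp only [b, OrthonormalBasis.coe_mk, Fin.sum_univ_four]
  simp [inner_smul_left, inner_smul_right]
  rw [real_inner_comm v P, real_inner_comm v N, real_inner_comm v X, real_inner_comm v Y]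
  rw [div_eq_mul_inv, ← hr2]; ring

structure NSurf (F N : R2 → E4) (E : R2 → ℝ) (σ : ℝ) : Prop where
  sF : Sm F
  sN : Sm N
  sE : Sm E
  hσ : σ^2 = 1
  Epos : ∀ p, 0 < E p
  FF : ∀ p, ⟪F p, F p⟫ = 1
  NN : ∀ p, ⟪N p, N p⟫ = 1
  FN : ∀ p, ⟪F p, N p⟫ = 0
  FX : ∀ p, ⟪F p, dd e1 F p⟫ = 0
  FY : ∀ p, ⟪F p, dd e2 F p⟫ = 0
  NX : ∀ p, ⟪N p, dd e1 F p⟫ = 0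
  NY : ∀ p, ⟪N p, dd e2 F p⟫ = 0
  XX : ∀ p, ⟪dd e1 F p, dd e1 F p⟫ = E p
  YY : ∀ p, ⟪dd e2 F p, dd e2 F p⟫ = E p
  XY : ∀ p, ⟪dd e1 F p, dd e2 F p⟫ = 0
  h11 : ∀ p, ⟪dd e1 (dd e1 F) p, N p⟫ = σ
  h12 : ∀ p, ⟪dd e1 (dd e2 F) p, N p⟫ = 0
  h22 : ∀ p, ⟪dd e2 (dd e2 F) p, N p⟫ = -σ
  N1 : ∀ p, dd e1 N p = (-(σ / E p)) • dd e1 F p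
  N2 : ∀ p, dd e2 N p = (σ / E p) • dd e2 F p
  lapF : ∀ p, dd e1 (dd e1 F) p + dd e2 (dd e2 F) p = (-(2 * E p)) • F p
  lapN : ∀ p, dd e1 (dd e1 N) p + dd e2 (dd e2 N) p = (-(2 / E p)) • N p
  gauss : ∀ p, E p * (dd e1 (dd e1 E) p + dd e2 (dd e2 E) p)
    - ((dd e1 E p)^2 + (dd e2 E p)^2) = 2 * E p - 2 * (E p)^3
  emb : ∀ p q, F p = F q → ∀ r, F (r + (q - p)) = F r
  cpt : ∃ ρ : ℝ, ∀ x p : R2, ∃ l : R2, (∀ r, F (r + l) = F r) ∧ q2 (x + l) p ≤ ρ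
  per : ∀ l, (∀ r, F (r + l) = F r) → ∀ r, N (r + l) = N r ∧ E (r + l) = E r

section
variable {V : Type*} [NormedAddCommGroup V] [NormedSpace ℝ V]
lemma dd_dd_split {f : R2 → V} (hf : Sm f) (b p : R2) :
    dd b (dd b f) p = (b.1^2) • dd e1 (dd e1 f) p + (2 * b.1 * b.2) • dd e1 (dd e2 f) p
      + (b.2^2) • dd e2 (dd e2 f) p := by
  have h1 : dd b f = fun q => b.1 • dd e1 f q + b.2 • dd e2 f q := funext fun q => dd_split f b q
  have h2 : ∀ v, dd v (dd b f) p = b.1 • dd v (dd e1 f) p + b.2 • dd v (dd e2 f) p := by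
    intro v
    have hsm : ∀ (c : ℝ) (w : R2), Sm (fun q => c • dd w f q) := fun c w =>
      contDiff_const.smul (hf.dd w)
    rw [h1, dd_add (hsm _ _) (hsm _ _)]
    have := dd_smul (c := fun _ => b.1) contDiff_const (hf.dd e1) v p
    have h' := dd_smul (c := fun _ => b.2) contDiff_const (hf.dd e2) v p
    simp only [dd_const, zero_smul, add_zero] at this h'
    rw [this, h']
  rw [dd_split (dd b f) b p, h2, h2, dd_comm hf e2 e1]
  module
end

lemma two_point_var {F N : R2 → E4} {Φ : R2 → ℝ} (sF : Sm F) (sN : Sm N) (sΦ : Sm Φ) (x y : R2)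
    (hZ : ∀ x y, 0 ≤ Φ x * (1 - ⟪F x, F y⟫) + ⟪N x, F y⟫)
    (h0 : Φ x * (1 - ⟪F x, F y⟫) + ⟪N x, F y⟫ = 0) (a b : R2) :
    dd a Φ x * (1 - ⟪F x, F y⟫) - Φ x * (⟪dd a F x, F y⟫ + ⟪F x, dd b F y⟫)
      + ⟪dd a N x, F y⟫ + ⟪N x, dd b F y⟫ = 0 ∧
    0 ≤ dd a (dd a Φ) x * (1 - ⟪F x, F y⟫)
      - 2 * dd a Φ x * (⟪dd a F x, F y⟫ + ⟪F x, dd b F y⟫)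
      - Φ x * (⟪dd a (dd a F) x, F y⟫ + 2 * ⟪dd a F x, dd b F y⟫ + ⟪F x, dd b (dd b F) y⟫)
      + ⟪dd a (dd a N) x, F y⟫ + 2 * ⟪dd a N x, dd b F y⟫ + ⟪N x, dd b (dd b F) y⟫ := by
  have lP := dd_line sF x a
  have lP' := dd_line (sF.dd a) x a
  have ln := dd_line sN x a
  have ln' := dd_line (sN.dd a) x a
  have lΦ := dd_line sΦ x a
  have lΦ' := dd_line (sΦ.dd a) x a
  have lQ := dd_line sF y b
  have lQ' := dd_line (sF.dd b) y b
  have key := second_deriv_nonneg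
    (f := fun τ => Φ (x + τ • a) * (1 - ⟪F (x + τ • a), F (y + τ • b)⟫)
      + ⟪N (x + τ • a), F (y + τ • b)⟫)
    (fun τ => ((lΦ τ).mul (((lP τ).inner ℝ (lQ τ)).const_sub 1)).add ((ln τ).inner ℝ (lQ τ)))
    (((lΦ' 0).mul (((lP 0).inner ℝ (lQ 0)).const_sub 1)).add
      ((lΦ 0).mul (((lP 0).inner ℝ (lQ' 0)).add ((lP' 0).inner ℝ (lQ 0))).neg) |>.add
      (((ln 0).inner ℝ (lQ' 0)).add ((ln' 0).inner ℝ (lQ 0))))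
    (fun τ => by
      simp only [zero_smul, add_zero]
      rw [h0]; exact hZ _ _)
  simp only [zero_smul, add_zero] at key
  obtain ⟨k1, k2⟩ := key
  constructor
  · linarith
  · simp at k2
    linarith

end part2

section part3

variable {F N : R2 → E4} {E : R2 → ℝ} {σ : ℝ}

lemma NSurf.parseval (S : NSurf F N E σ) (p : R2) (u v : E4) :
    ⟪u, v⟫ = ⟪u, F p⟫ * ⟪v, F p⟫ + ⟪u, N p⟫ * ⟪v, N p⟫
      + (⟪u, dd e1 F p⟫ * ⟪v, dd e1 F p⟫ + ⟪u, dd e2 F p⟫ * ⟪v, dd e2 F p⟫) / E p :=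
  frame_parseval (S.Epos p) (S.FF p) (S.NN p) (S.XX p) (S.YY p) (S.FN p) (S.FX p) (S.FY p)
    (S.NX p) (S.NY p) (S.XY p) u v

lemma NSurf.FF11 (S : NSurf F N E σ) (p : R2) : ⟪F p, dd e1 (dd e1 F) p⟫ = - E p := by
  have h := dd_inner S.sF (S.sF.dd e1) e1 p
  rw [dd_const_of S.FX, S.XX] at h; linarith
lemma NSurf.FF22 (S : NSurf F N E σ) (p : R2) : ⟪F p, dd e2 (dd e2 F) p⟫ = - E p := by
  have h := dd_inner S.sF (S.sF.dd e2) e2 p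
  rw [dd_const_of S.FY, S.YY] at h; linarith
lemma NSurf.FF12 (S : NSurf F N E σ) (p : R2) : ⟪F p, dd e1 (dd e2 F) p⟫ = 0 := by
  have h := dd_inner S.sF (S.sF.dd e2) e1 p
  rw [dd_const_of S.FY, S.XY] at h; linarith

lemma mat_aux {a b c d k : ℝ} (hk : 0 < k) (h1 : a^2 + b^2 = k) (h2 : c^2 + d^2 = k)
    (h3 : a * c + b * d = 0) : (a^2 - b^2) + (c^2 - d^2) = 0 := by
  have e : k * (k - (a^2 + c^2)) = 0 := by
    have e1 : (a * c)^2 = (b * d)^2 := by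
      have : a * c = - (b * d) := by linarith
      rw [this]; ring
    have eb : b^2 = k - a^2 := by linarith
    have ed : d^2 = k - c^2 := by linarith
    have : a^2 * c^2 = (k - a^2) * (k - c^2) := by rw [← eb, ← ed]; linarith [e1, mul_pow a c 2, mul_pow b d 2]
    nlinarith [this]
  have := (mul_eq_zero.1 e).resolve_left hk.ne'
  linarith

/-- The variation vector at `y`. -/
lemma NSurf.refl_vec (S : NSurf F N E σ) (x y : R2) {φ D : ℝ}
    (hDdef : D = 1 - ⟪F x, F y⟫)
    (h0 : ⟪N x, F y⟫ = - (φ * D)) (hD : 0 < D)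
    (o1 : ⟪N x, dd e1 F y⟫ = φ * ⟪F x, dd e1 F y⟫)
    (o2 : ⟪N x, dd e2 F y⟫ = φ * ⟪F x, dd e2 F y⟫) (X : E4)
    (XF : ⟪F x, X⟫ = 0) (XN : ⟪N x, X⟫ = 0) :
    ∃ b : R2, dd b F y = X + (⟪X, F y⟫ / D) • (F x - F y) := by
  set U : E4 := N x - φ • F x + φ • F y with hU
  set v : E4 := X + (⟪X, F y⟫ / D) • (F x - F y) with hv
  have PQ : ⟪F x, F y⟫ = 1 - D := by linarith
  have QP : ⟪F y, F x⟫ = 1 - D := by rw [real_inner_comm]; exact PQ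
  have UQ : ⟪U, F y⟫ = 0 := by
    simp only [hU, inner_add_left, inner_sub_left, inner_smul_left, S.FF, PQ, h0]; simp; ring
  have U1 : ⟪U, dd e1 F y⟫ = 0 := by
    simp only [hU, inner_add_left, inner_sub_left, inner_smul_left, S.FX, o1]; simp
  have U2 : ⟪U, dd e2 F y⟫ = 0 := by
    simp only [hU, inner_add_left, inner_sub_left, inner_smul_left, S.FY, o2]; simp
  have NF : ⟪N x, F x⟫ = 0 := by rw [real_inner_comm]; exact S.FN x
  have QN : ⟪F y, N x⟫ = - (φ * D) := by rw [real_inner_comm]; exact h0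
  have UU : ⟪U, U⟫ = 1 := by
    simp only [hU, inner_add_left, inner_sub_left, inner_smul_left, inner_add_right, inner_sub_right,
      inner_smul_right, S.FF, S.NN, S.FN, NF, PQ, QP, h0, QN]
    simp; ring
  have pU := S.parseval y U
  simp only [UQ, U1, U2, zero_mul, zero_add, zero_div, add_zero] at pU
  have Um : ⟪U, N y⟫ ≠ 0 := by
    intro h
    have := pU U; rw [UU, h] at this; simp at this
  have vQ : ⟪v, F y⟫ = 0 := by
    simp only [hv, inner_add_left, inner_sub_left, inner_smul_left, S.FF, PQ]; simp; field_simp; ring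
  have FxX : ⟪X, F x⟫ = 0 := by rw [real_inner_comm]; exact XF
  have NxX : ⟪X, N x⟫ = 0 := by rw [real_inner_comm]; exact XN
  have vU : ⟪U, v⟫ = 0 := by
    rw [real_inner_comm]
    simp only [hU, hv, inner_add_left, inner_sub_left, inner_smul_left, inner_add_right,
      inner_sub_right, inner_smul_right, S.FF, S.NN, S.FN, PQ, QP, QN, FxX, NxX]
    simp; field_simp; ring
  have vm : ⟪v, N y⟫ = 0 := by
    have := pU v; rw [vU] at this
    exact (mul_eq_zero.1 this.symm).resolve_left Um
  refine ⟨(⟪v, dd e1 F y⟫ / E y, ⟪v, dd e2 F y⟫ / E y), ?_⟩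
  rw [dd_split]
  apply ext_inner_right ℝ
  intro z
  rw [S.parseval y v z, vQ, vm]
  simp only [inner_add_left, inner_smul_left]
  rw [real_inner_comm z, real_inner_comm z]
  simp; ring

lemma NSurf.touching (S : NSurf F N E σ) {Φ : R2 → ℝ} (sΦ : Sm Φ) (x y : R2)
    (hZ : ∀ x y, 0 ≤ Φ x * (1 - ⟪F x, F y⟫) + ⟪N x, F y⟫)
    (h0 : Φ x * (1 - ⟪F x, F y⟫) + ⟪N x, F y⟫ = 0) (hD : 0 < 1 - ⟪F x, F y⟫) :
    dd e1 Φ x * (1 - ⟪F x, F y⟫) = (Φ x + σ / E x) * ⟪dd e1 F x, F y⟫ ∧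
    dd e2 Φ x * (1 - ⟪F x, F y⟫) = (Φ x - σ / E x) * ⟪dd e2 F x, F y⟫ ∧
    0 ≤ (dd e1 (dd e1 Φ) x + dd e2 (dd e2 Φ) x + (2 / E x - 2 * E x) * Φ x) * (1 - ⟪F x, F y⟫)
      - 2 * (dd e1 Φ x * ⟪dd e1 F x, F y⟫ + dd e2 Φ x * ⟪dd e2 F x, F y⟫) := by
  have var := two_point_var S.sF S.sN sΦ x y hZ h0
  have z0 : ∀ (f : R2 → E4), dd 0 f x = 0 := fun f => by simp [dd]
  have z0' : ∀ (f : R2 → ℝ), dd 0 f x = 0 := fun f => by simp [dd]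
  have z1 : ∀ (f : R2 → E4), dd 0 f y = 0 := fun f => by simp [dd]
  obtain ⟨D, hDdef⟩ : ∃ D, D = 1 - ⟪F x, F y⟫ := ⟨_, rfl⟩
  have PQ : ⟪F x, F y⟫ = 1 - D := by linarith
  have o1 : ⟪N x, dd e1 F y⟫ = Φ x * ⟪F x, dd e1 F y⟫ := by
    have := (var 0 e1).1; simp [z0, z0'] at this; linarith
  have o2 : ⟪N x, dd e2 F y⟫ = Φ x * ⟪F x, dd e2 F y⟫ := by
    have := (var 0 e2).1; simp [z0, z0'] at this; linarith
  have i1 := (var e1 0).1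
  have i2 := (var e2 0).1
  simp only [z1, S.N1, S.N2, inner_smul_left, inner_zero_right] at i1 i2
  simp only [conj_trivial] at i1 i2
  have hD' := hD
  rw [← hDdef] at h0 hD i1 i2 ⊢
  have h0' : ⟪N x, F y⟫ = - (Φ x * D) := by linarith
  obtain ⟨b, hb⟩ := S.refl_vec x y hDdef h0' hD o1 o2 (dd e1 F x) (S.FX x) (S.NX x)
  obtain ⟨c, hc⟩ := S.refl_vec x y hDdef h0' hD o1 o2 (dd e2 F x) (S.FY x) (S.NY x)
  have QP : ⟪F y, F x⟫ = 1 - D := by rw [real_inner_comm]; exact PQ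
  obtain ⟨q₁, hq1⟩ : ∃ q, ⟪dd e1 F x, F y⟫ = q := ⟨_, rfl⟩
  obtain ⟨q₂, hq2⟩ : ∃ q, ⟪dd e2 F x, F y⟫ = q := ⟨_, rfl⟩
  have hq1' : ⟪F y, dd e1 F x⟫ = q₁ := by rw [real_inner_comm]; exact hq1
  have hq2' : ⟪F y, dd e2 F x⟫ = q₂ := by rw [real_inner_comm]; exact hq2
  have XF : ⟪dd e1 F x, F x⟫ = 0 := by rw [real_inner_comm]; exact S.FX x
  have YF : ⟪dd e2 F x, F x⟫ = 0 := by rw [real_inner_comm]; exact S.FY x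
  rw [hq1] at hb
  rw [hq2] at hc
  have hE := S.Epos x
  have hEy := S.Epos y
  have exp : ∀ u w, ⟪dd u F y, dd w F y⟫ = E y * (u.1 * w.1 + u.2 * w.2) := by
    intro u w
    rw [dd_split F u, dd_split F w]
    have := S.XY y
    have h' : ⟪dd e2 F y, dd e1 F y⟫ = 0 := by rw [real_inner_comm]; exact this
    simp only [inner_add_left, inner_add_right, inner_smul_left, inner_smul_right, S.XX, S.YY, this, h']
    simp; ring
  have bb : ⟪dd b F y, dd b F y⟫ = E x := by
    rw [hb]
    simp only [inner_add_left, inner_add_right, inner_sub_left, inner_sub_right, inner_smul_left,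
      inner_smul_right, S.XX, S.FF, PQ, QP, XF, S.FX, hq1, hq1']
    simp; field_simp; ring
  have cc : ⟪dd c F y, dd c F y⟫ = E x := by
    rw [hc]
    simp only [inner_add_left, inner_add_right, inner_sub_left, inner_sub_right, inner_smul_left,
      inner_smul_right, S.YY, S.FF, PQ, QP, YF, S.FY, hq2, hq2']
    simp; field_simp; ring
  have bc : ⟪dd b F y, dd c F y⟫ = 0 := by
    rw [hb, hc]
    simp only [inner_add_left, inner_add_right, inner_sub_left, inner_sub_right, inner_smul_left,
      inner_smul_right, S.XY, S.FF, PQ, QP, XF, YF, S.FX, S.FY, hq1, hq1', hq2, hq2']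
    simp; field_simp; ring
  have Pb : ⟪F x, dd b F y⟫ = q₁ := by
    rw [hb]
    simp only [inner_add_right, inner_sub_right, inner_smul_right, S.FX, S.FF, PQ]
    field_simp; ring
  have Pc : ⟪F x, dd c F y⟫ = q₂ := by
    rw [hc]
    simp only [inner_add_right, inner_sub_right, inner_smul_right, S.FY, S.FF, PQ]
    field_simp; ring
  have P1b : ⟪dd e1 F x, dd b F y⟫ = E x - q₁^2 / D := by
    rw [hb]
    simp only [inner_add_right, inner_sub_right, inner_smul_right, S.XX, XF, hq1]
    field_simp; ring
  have P2c : ⟪dd e2 F x, dd c F y⟫ = E x - q₂^2 / D := by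
    rw [hc]
    simp only [inner_add_right, inner_sub_right, inner_smul_right, S.YY, YF, hq2]
    field_simp; ring
  -- second derivative terms in `y`
  have mat : (b.1^2 - b.2^2) + (c.1^2 - c.2^2) = 0 := by
    refine mat_aux (k := E x / E y) (div_pos hE hEy) ?_ ?_ ?_
    · rw [exp] at bb; field_simp; linarith
    · rw [exp] at cc; field_simp; linarith
    · rw [exp] at bc; exact (mul_eq_zero.1 bc).resolve_left hEy.ne'
  have Uz : ∀ z, ⟪N x, z⟫ - Φ x * ⟪F x, z⟫ = (⟪N x, N y⟫ - Φ x * ⟪F x, N y⟫) * ⟪z, N y⟫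
      - Φ x * ⟪F y, z⟫ := by
    intro z
    rw [S.parseval y (N x) z, S.parseval y (F x) z, o1, o2, h0', PQ, real_inner_comm z (F y)]
    ring
  have second : ∀ u, ⟪N x, dd u (dd u F) y⟫ - Φ x * ⟪F x, dd u (dd u F) y⟫
      = (⟪N x, N y⟫ - Φ x * ⟪F x, N y⟫) * (σ * (u.1^2 - u.2^2))
        + Φ x * ⟪dd u F y, dd u F y⟫ := by
    intro u
    rw [Uz, exp, dd_dd_split S.sF]
    simp only [inner_add_left, inner_add_right, inner_smul_left, inner_smul_right, S.h11, S.h12,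
      S.h22, S.FF11, S.FF22, S.FF12]
    simp; ring
  have s1 := second b
  have s2 := second c
  rw [bb] at s1
  rw [cc] at s2
  have v1 := (var e1 b).2
  have v2 := (var e2 c).2
  have lF : ⟪dd e1 (dd e1 F) x, F y⟫ + ⟪dd e2 (dd e2 F) x, F y⟫ = -(2 * E x) * (1 - D) := by
    rw [← inner_add_left, S.lapF, inner_smul_left, PQ]; simp
  have lN : ⟪dd e1 (dd e1 N) x, F y⟫ + ⟪dd e2 (dd e2 N) x, F y⟫ = (2 / E x) * (Φ x * D) := by
    rw [← inner_add_left, S.lapN, inner_smul_left, h0']; simp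
  simp only [S.N1, S.N2, inner_smul_left, P1b, P2c, Pb, Pc, hq1, hq2, ← hDdef] at v1 v2 i1 i2 ⊢
  simp only [conj_trivial] at v1 v2
  have j1 : dd e1 Φ x * D = (Φ x + σ / E x) * q₁ := by linarith [S.FX y]
  have j2 : dd e2 Φ x * D = (Φ x - σ / E x) * q₂ := by linarith [S.FX y]
  refine ⟨j1, j2, ?_⟩
  have k1 : (Φ x + σ / E x) * (q₁^2 / D) = dd e1 Φ x * q₁ := by
    have : (Φ x + σ / E x) * (q₁^2 / D) = ((Φ x + σ / E x) * q₁) * q₁ / D := by ring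
    rw [this, ← j1]; field_simp
  have k2 : (Φ x - σ / E x) * (q₂^2 / D) = dd e2 Φ x * q₂ := by
    have : (Φ x - σ / E x) * (q₂^2 / D) = ((Φ x - σ / E x) * q₂) * q₂ / D := by ring
    rw [this, ← j2]; field_simp
  have hsum : (⟪N x, N y⟫ - Φ x * ⟪F x, N y⟫) * (σ * (b.1^2 - b.2^2))
      + (⟪N x, N y⟫ - Φ x * ⟪F x, N y⟫) * (σ * (c.1^2 - c.2^2)) = 0 := by
    rw [← mul_add, ← mul_add, mat]; ring
  have lF' : Φ x * ⟪dd e1 (dd e1 F) x, F y⟫ + Φ x * ⟪dd e2 (dd e2 F) x, F y⟫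
      = Φ x * (-(2 * E x) * (1 - D)) := by rw [← mul_add, lF]
  linarith

end part3

section part4

variable {F N : R2 → E4} {E : R2 → ℝ} {σ : ℝ}

lemma NSurf.sig (S : NSurf F N E σ) : σ = 1 ∨ σ = -1 := by
  simpa using S.hσ

lemma quad_nonneg {A B C u v : ℝ} (hA : 0 < A) (h : B^2 < A * C) :
    0 ≤ u^2 * A + 2 * u * v * B + v^2 * C := by
  have : 0 ≤ A * (u^2 * A + 2 * u * v * B + v^2 * C) := by
    nlinarith [sq_nonneg (u * A + v * B), mul_nonneg (sq_nonneg v) (sub_nonneg.2 h.le)]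
  exact nonneg_of_mul_nonneg_right this hA

lemma NSurf.near_diag (S : NSurf F N E σ) {κ : ℝ} (hκ : 1 < κ) (x0 : R2) :
    ∀ᶠ z : R2 × R2 in nhds (x0, x0),
      0 ≤ κ / E z.1 * (1 - ⟪F z.1, F z.2⟫) + ⟪N z.1, F z.2⟫ := by
  have cF := S.sF.continuous
  have cN := S.sN.continuous
  have cE := S.sE.continuous
  have hEn : ∀ p, E p ≠ 0 := fun p => (S.Epos p).ne'
  set W : R2 → E4 := fun x => N x - (κ / E x) • F x with hW
  have cW : Continuous W := by
    have : Continuous fun x => κ / E x := continuous_const.div cE hEn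
    fun_prop
  have c11 := (S.sF.dd e1 |>.dd e1).continuous
  have c12 := (S.sF.dd e2 |>.dd e1).continuous
  have c22 := (S.sF.dd e2 |>.dd e2).continuous
  set A : R2 × R2 → ℝ := fun z => ⟪W z.1, dd e1 (dd e1 F) z.2⟫ with hA
  set B : R2 × R2 → ℝ := fun z => ⟪W z.1, dd e1 (dd e2 F) z.2⟫ with hB
  set C : R2 × R2 → ℝ := fun z => ⟪W z.1, dd e2 (dd e2 F) z.2⟫ with hC
  have cA : Continuous A := (cW.comp continuous_fst).inner (c11.comp continuous_snd)
  have cB : Continuous B := (cW.comp continuous_fst).inner (c12.comp continuous_snd)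
  have cC : Continuous C := (cW.comp continuous_fst).inner (c22.comp continuous_snd)
  have A0 : A (x0, x0) = σ + κ := by
    simp only [hA, hW, inner_sub_left, inner_smul_left, S.FF11]
    rw [real_inner_comm, S.h11]
    have := hEn x0
    simp; field_simp
  have B0 : B (x0, x0) = 0 := by
    simp only [hB, hW, inner_sub_left, inner_smul_left, S.FF12]
    rw [real_inner_comm, S.h12]; simp
  have C0 : C (x0, x0) = -σ + κ := by
    simp only [hC, hW, inner_sub_left, inner_smul_left, S.FF22]
    rw [real_inner_comm, S.h22]
    have := hEn x0
    simp; field_simp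
  have hσ := S.sig
  have hopen : IsOpen {z | 0 < A z ∧ B z ^ 2 < A z * C z} :=
    (isOpen_lt continuous_const cA).inter (isOpen_lt (cB.pow 2) (cA.mul cC))
  have hmem : (x0, x0) ∈ {z | 0 < A z ∧ B z ^ 2 < A z * C z} := by
    simp only [mem_setOf_eq, A0, B0, C0]
    rcases hσ with h | h <;> subst h <;> constructor <;> nlinarith
  obtain ⟨r, hr, hball⟩ := Metric.isOpen_iff.1 hopen _ hmem
  filter_upwards [Metric.ball_mem_nhds (x0, x0) hr] with z hz
  obtain ⟨x, y⟩ := z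
  rw [← ball_prod_same] at hz hball
  obtain ⟨hx, hy⟩ := hz
  simp only at hx hy ⊢
  set v := y - x with hv
  have l1 := dd_line S.sF x v
  have l2 := dd_line (S.sF.dd v) x v
  have key := nonneg_of_second
    (f := fun τ : ℝ => κ / E x + ⟪W x, F (x + τ • v)⟫)
    (f' := fun τ : ℝ => ⟪W x, dd v F (x + τ • v)⟫)
    (f'' := fun τ : ℝ => ⟪W x, dd v (dd v F) (x + τ • v)⟫)
    (fun τ => by
      have := ((hasDerivAt_const τ (W x)).inner ℝ (l1 τ)).const_add (κ / E x)
      simpa using this)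
    (fun τ => by
      have := ((hasDerivAt_const τ (W x)).inner ℝ (l2 τ))
      simpa using this)
    (by
      have : ⟪N x, F x⟫ = 0 := by rw [real_inner_comm]; exact S.FN x
      simp only [hW, zero_smul, add_zero, inner_sub_left, inner_smul_left, S.FF, this]; simp)
    (by
      simp only [hW, zero_smul, add_zero]
      rw [dd_split]
      simp only [inner_sub_left, inner_add_right, inner_smul_left, inner_smul_right, S.FX, S.FY,
        S.NX, S.NY]; simp)
    (by
      intro τ hτ
      have hm : x + τ • v ∈ Metric.ball x0 r := by
        have := (convex_ball x0 r).add_smul_sub_mem hx hy hτ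
        simpa [hv] using this
      have hb := hball (mk_mem_prod hx hm)
      rw [dd_dd_split S.sF]
      simp only [inner_add_right, inner_smul_right]
      exact quad_nonneg hb.1 hb.2)
  simp only [hW, inner_sub_left, inner_smul_left, one_smul, hv] at key
  simp at key
  linarith

lemma NSurf.D_nonneg (S : NSurf F N E σ) (x y : R2) : 0 ≤ 1 - ⟪F x, F y⟫ := by
  have nx : ‖F x‖ = 1 := by have := S.FF x; rw [real_inner_self_eq_norm_sq] at this; nlinarith [norm_nonneg (F x)]
  have ny : ‖F y‖ = 1 := by have := S.FF y; rw [real_inner_self_eq_norm_sq] at this; nlinarith [norm_nonneg (F y)]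
  have := real_inner_le_norm (F x) (F y)
  rw [nx, ny] at this; linarith

lemma NSurf.D_zero (S : NSurf F N E σ) {x y : R2} (h : 1 - ⟪F x, F y⟫ = 0) : F x = F y := by
  have : ⟪F x - F y, F x - F y⟫ = 0 := by
    rw [inner_sub_left, inner_sub_right, inner_sub_right, S.FF, S.FF, real_inner_comm (F x) (F y)]
    linarith
  exact sub_eq_zero.1 (inner_self_eq_zero.1 this)

lemma NSurf.extremal (S : NSurf F N E σ) {κ κ₁ ρ : ℝ} (hκ : 1 < κ) (p : R2) (A : R2 → ℝ)
    (cA : Continuous A) (A0 : ∀ x, 0 < A x) (A1 : ∀ x, A x ≤ 1) (hκA : ∀ x, κ ≤ κ₁ * A x)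
    (hκ1 : κ < κ₁)
    (tr : ∀ x, ∃ l : R2, (∀ r, F (r + l) = F r) ∧ q2 (x + l) p ≤ ρ ∧ A (x + l) ≤ A x)
    (x0 y0 : R2) (hD0 : 0 < 1 - ⟪F x0, F y0⟫)
    (h0 : κ₁ / E x0 * (1 - ⟪F x0, F y0⟫) + ⟪N x0, F y0⟫ ≤ 0) :
    ∃ K, κ₁ ≤ K ∧ (∀ x y, 0 ≤ K * A x / E x * (1 - ⟪F x, F y⟫) + ⟪N x, F y⟫) ∧
      ∃ x y, 0 < 1 - ⟪F x, F y⟫ ∧ K * A x / E x * (1 - ⟪F x, F y⟫) + ⟪N x, F y⟫ = 0 := by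
  have cF := S.sF.continuous
  have cN := S.sN.continuous
  have cE := S.sE.continuous
  have hEn : ∀ p, E p ≠ 0 := fun p => (S.Epos p).ne'
  set B : Set R2 := {x | q2 x p ≤ ρ} with hB
  have cB : IsCompact B := by
    have hcl : IsClosed B := isClosed_le (by unfold q2; fun_prop) continuous_const
    have hK : IsCompact (Icc (p.1 - (ρ + 1)) (p.1 + (ρ + 1)) ×ˢ Icc (p.2 - (ρ + 1)) (p.2 + (ρ + 1))) :=
      isCompact_Icc.prod isCompact_Icc
    refine hK.of_isClosed_subset hcl ?_
    rintro ⟨a, b⟩ hab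
    simp only [hB, q2, mem_setOf_eq] at hab
    refine ⟨⟨?_, ?_⟩, ⟨?_, ?_⟩⟩ <;> simp only <;>
      nlinarith [sq_nonneg (a - p.1), sq_nonneg (b - p.2), sq_nonneg (a - p.1 - 1), sq_nonneg (b - p.2 - 1),
        sq_nonneg (a - p.1 + 1), sq_nonneg (b - p.2 + 1)]
  set Z : R2 × R2 → ℝ := fun z => κ / E z.1 * (1 - ⟪F z.1, F z.2⟫) + ⟪N z.1, F z.2⟫ with hZ
  set D : R2 × R2 → ℝ := fun z => 1 - ⟪F z.1, F z.2⟫ with hD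
  have cD : Continuous D := by fun_prop
  set W : Set (R2 × R2) := {z | ∀ᶠ z' in nhds z, 0 ≤ Z z'} with hW
  have oW : IsOpen W := isOpen_setOf_eventually_nhds
  have hDW : ∀ z, D z = 0 → z ∈ W := by
    rintro ⟨x, y⟩ hz
    have hxy : F x = F y := S.D_zero hz
    have hp := S.emb y x hxy.symm
    have nd := S.near_diag hκ x
    have ct : Filter.Tendsto (fun z : R2 × R2 => (z.1, z.2 + (x - y))) (nhds (x, y)) (nhds (x, x)) := by
      have : Continuous (fun z : R2 × R2 => (z.1, z.2 + (x - y))) := by fun_prop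
      have h := this.tendsto (x, y)
      simpa using h
    filter_upwards [ct.eventually nd] with z' hz'
    simp only [hp] at hz'
    exact hz'
  obtain ⟨δ, hδ, hδ'⟩ : ∃ δ, 0 < δ ∧ ∀ z ∈ (B ×ˢ B) \ W, δ ≤ D z := by
    refine ((cB.prod cB).diff oW).exists_forall_le' cD.continuousOn ?_
    intro z hz
    refine lt_of_le_of_ne (S.D_nonneg _ _) ?_
    intro h
    exact hz.2 (hDW z h.symm)
  have near : ∀ z ∈ B ×ˢ B, D z < δ → 0 ≤ Z z := by
    intro z hz hlt
    by_contra hneg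
    have : z ∉ W := fun h => hneg h.self_of_nhds
    exact absurd (hδ' z ⟨hz, this⟩) (not_le.2 hlt)
  set C : Set (R2 × R2) := (B ×ˢ B) ∩ {z | δ ≤ D z} with hC
  have cC : IsCompact C := (cB.prod cB).inter_right (isClosed_le continuous_const cD)
  set R : R2 × R2 → ℝ := fun z => (- ⟪N z.1, F z.2⟫ * E z.1) / (D z * A z.1) with hR
  have cR : ContinuousOn R C := by
    apply ContinuousOn.div
    · fun_prop
    · fun_prop
    · intro z hz
      have : 0 < D z := lt_of_lt_of_le hδ hz.2
      exact (mul_pos this (A0 _)).ne'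
  -- move the base point
  obtain ⟨l, hl, hlB, hlA⟩ := tr x0
  obtain ⟨k, hk, hkB, -⟩ := tr y0
  have hD1 : D (x0 + l, y0 + k) = 1 - ⟪F x0, F y0⟫ := by simp only [hD, hl, hk]
  have hz1 : (x0 + l, y0 + k) ∈ C := by
    refine ⟨⟨hlB, hkB⟩, ?_⟩
    by_contra hlt
    have := near (x0 + l, y0 + k) ⟨hlB, hkB⟩ (not_le.1 hlt)
    simp only [hZ, hl, hk, (S.per l hl x0).1, (S.per l hl x0).2] at this
    have h2 : κ / E x0 * (1 - ⟪F x0, F y0⟫) < κ₁ / E x0 * (1 - ⟪F x0, F y0⟫) := by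
      apply mul_lt_mul_of_pos_right _ hD0
      exact div_lt_div_of_pos_right hκ1 (S.Epos _)
    linarith
  have hR1 : κ₁ ≤ R (x0 + l, y0 + k) := by
    have hA := A0 (x0 + l)
    have hA1 := A1 (x0 + l)
    simp only [hR, hD1, hl, hk, (S.per l hl x0).1, (S.per l hl x0).2]
    rw [le_div_iff₀ (mul_pos hD0 hA)]
    have hE := S.Epos x0
    have h1 : κ₁ * (1 - ⟪F x0, F y0⟫) ≤ - ⟪N x0, F y0⟫ * E x0 := by
      have : (κ₁ / E x0 * (1 - ⟪F x0, F y0⟫) + ⟪N x0, F y0⟫) * E x0 ≤ 0 :=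
        mul_nonpos_of_nonpos_of_nonneg h0 hE.le
      have e : (κ₁ / E x0 * (1 - ⟪F x0, F y0⟫) + ⟪N x0, F y0⟫) * E x0
        = κ₁ * (1 - ⟪F x0, F y0⟫) + ⟪N x0, F y0⟫ * E x0 := by field_simp
      linarith
    have h2 : 0 ≤ κ₁ * (1 - ⟪F x0, F y0⟫) := mul_nonneg (by linarith) hD0.le
    nlinarith
  obtain ⟨zm, hzm, hmax⟩ := cC.exists_isMaxOn ⟨_, hz1⟩ cR
  have hK1 : κ₁ ≤ R zm := hR1.trans (hmax hz1)
  have inB : ∀ z ∈ B ×ˢ B, 0 ≤ R zm * A z.1 / E z.1 * (1 - ⟪F z.1, F z.2⟫) + ⟪N z.1, F z.2⟫ := by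
    intro z hz
    have hE := S.Epos z.1
    have hA := A0 z.1
    by_cases hd : D z < δ
    · have h1 := near z hz hd
      have h2 : κ / E z.1 * (1 - ⟪F z.1, F z.2⟫) ≤ R zm * A z.1 / E z.1 * (1 - ⟪F z.1, F z.2⟫) := by
        apply mul_le_mul_of_nonneg_right _ (S.D_nonneg _ _)
        apply div_le_div_of_nonneg_right _ hE.le
        exact (hκA _).trans (mul_le_mul_of_nonneg_right hK1 hA.le)
      simp only [hZ] at h1
      linarith
    · have hmz : R z ≤ R zm := hmax ⟨hz, not_lt.1 hd⟩
      have hDz : 0 < D z := lt_of_lt_of_le hδ (not_lt.1 hd)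
      have h1 : - ⟪N z.1, F z.2⟫ * E z.1 ≤ R zm * (D z * A z.1) :=
        (div_le_iff₀ (mul_pos hDz hA)).1 hmz
      have e : R zm * A z.1 / E z.1 * (1 - ⟪F z.1, F z.2⟫) + ⟪N z.1, F z.2⟫
        = (R zm * (D z * A z.1) - (- ⟪N z.1, F z.2⟫ * E z.1)) / E z.1 := by
          simp only [hD]; field_simp; ring
      rw [e]
      exact div_nonneg (by linarith) hE.le
  refine ⟨R zm, hK1, ?_, zm.1, zm.2, lt_of_lt_of_le hδ hzm.2, ?_⟩
  · intro x y
    obtain ⟨l, hl, hlB, hlA⟩ := tr x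
    obtain ⟨k, hk, hkB, -⟩ := tr y
    have := inB (x + l, y + k) ⟨hlB, hkB⟩
    simp only [hl, hk, (S.per l hl x).1, (S.per l hl x).2] at this
    refine this.trans ?_
    have h2 : R zm * A (x + l) / E x * (1 - ⟪F x, F y⟫) ≤ R zm * A x / E x * (1 - ⟪F x, F y⟫) := by
      apply mul_le_mul_of_nonneg_right _ (S.D_nonneg _ _)
      apply div_le_div_of_nonneg_right _ (S.Epos x).le
      exact mul_le_mul_of_nonneg_left hlA (by linarith)
    linarith
  · have hDz : 0 < D zm := lt_of_lt_of_le hδ hzm.2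
    have hA := A0 zm.1
    have hE := S.Epos zm.1
    have hDe : 1 - ⟪F zm.1, F zm.2⟫ = D zm := rfl
    rw [hDe]
    simp only [hR]
    field_simp; ring

end part4

section part5

variable {F N : R2 → E4} {E : R2 → ℝ} {σ : ℝ}

lemma Sm.inv' {f : R2 → ℝ} (hf : Sm f) (h : ∀ p, f p ≠ 0) : Sm (fun q => (f q)⁻¹) := ContDiff.inv hf h

lemma sm_Phi {ψ : R2 → ℝ} (sψ : Sm ψ) (sE : Sm E) (hE : ∀ p, E p ≠ 0) (K : ℝ) :
    Sm (fun q => K * exp (ψ q) / E q) := (contDiff_const.mul sψ.exp).div sE hE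

lemma dd_Phi {ψ : R2 → ℝ} (sψ : Sm ψ) (sE : Sm E) (hE : ∀ p, E p ≠ 0) (K : ℝ) (v p : R2) :
    dd v (fun q => K * exp (ψ q) / E q) p
      = (K * exp (ψ p) / E p) * (dd v ψ p - dd v E p * (E p)⁻¹) := by
  have e : (fun q => K * exp (ψ q) / E q) = fun q => (K * exp (ψ q)) * (E q)⁻¹ := by
    funext q; rw [div_eq_mul_inv]
  have hs : Sm (fun q => K * exp (ψ q)) := contDiff_const.mul sψ.exp
  rw [e, dd_mul hs (sE.inv' hE), dd_inv sE v p (hE p),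
    dd_comp (φ := fun y => K * exp y) sψ v p ((Real.hasDerivAt_exp _).const_mul K)]
  have := hE p
  field_simp; ring

lemma dd_dd_Phi {ψ : R2 → ℝ} (sψ : Sm ψ) (sE : Sm E) (hE : ∀ p, E p ≠ 0) (K : ℝ) (v p : R2) :
    dd v (dd v (fun q => K * exp (ψ q) / E q)) p
      = (K * exp (ψ p) / E p) * ((dd v ψ p - dd v E p * (E p)⁻¹)^2 + dd v (dd v ψ) p
        - dd v (dd v E) p * (E p)⁻¹ + (dd v E p)^2 * ((E p)⁻¹)^2) := by
  have e : dd v (fun q => K * exp (ψ q) / E q)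
      = fun q => (K * exp (ψ q) / E q) * (dd v ψ q + -(dd v E q * (E q)⁻¹)) :=
    funext fun q => by rw [dd_Phi sψ sE hE]; ring
  have s1 : Sm (fun q => dd v E q * (E q)⁻¹) := (sE.dd v).mul (sE.inv' hE)
  have s2 : Sm (fun q => -(dd v E q * (E q)⁻¹)) := s1.neg
  rw [e, dd_mul (sm_Phi sψ sE hE K) ((sψ.dd v).add s2), dd_Phi sψ sE hE, dd_add (sψ.dd v) s2,
    dd_neg, dd_mul (sE.dd v) (sE.inv' hE), dd_inv sE v p (hE p)]
  have := hE p
  field_simp; ring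

lemma coef_aux {k κ : ℝ} (hκ : 1 < κ) (hk : κ ≤ k) :
    (κ - 1) / (κ + 1) ≤ (k - 1) / (k + 1) ∧ (κ - 1) / (κ + 1) ≤ (k + 1) / (k - 1) := by
  constructor
  · rw [div_le_div_iff₀ (by linarith) (by linarith)]; nlinarith
  · rw [div_le_div_iff₀ (by linarith) (by linarith)]; nlinarith

lemma alg_aux {k κ D g1 g2 q1 q2 L e σ : ℝ} (he : 0 < e) (hσ : σ = 1 ∨ σ = -1) (hκ : 1 < κ)
    (hk : κ ≤ k) (hD : 0 < D)
    (h1 : k / e * g1 * D = (k / e + σ / e) * q1) (h2 : k / e * g2 * D = (k / e - σ / e) * q2)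
    (h : 0 ≤ (k / e * (g1^2 + g2^2 + L)) * D - 2 * (k / e * g1 * q1 + k / e * g2 * q2)) :
    (κ - 1) / (κ + 1) * (g1^2 + g2^2) ≤ L := by
  have hk0 : 0 < k := by linarith
  obtain ⟨c1, c2⟩ := coef_aux hκ hk
  have kp : k + 1 ≠ 0 := by linarith
  have km : k - 1 ≠ 0 := by linarith
  have main : 0 ≤ k * D / e * (L - (g1^2 * ((k - σ) / (k + σ)) + g2^2 * ((k + σ) / (k - σ)))) := by
    have ks1 : k + σ ≠ 0 := by rcases hσ with h | h <;> subst h <;> [exact kp; simpa [sub_eq_add_neg] using km]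
    have ks2 : k - σ ≠ 0 := by rcases hσ with h | h <;> subst h <;> [exact km; simpa using kp]
    have hq1 : q1 = k * g1 * D / (k + σ) := by field_simp at h1 ⊢; linarith
    have hq2 : q2 = k * g2 * D / (k - σ) := by field_simp at h2 ⊢; linarith
    rw [hq1, hq2] at h
    refine h.trans (le_of_eq ?_)
    field_simp; ring
  have pos : 0 < k * D / e := by positivity
  have main2 : 0 ≤ L - (g1^2 * ((k - σ) / (k + σ)) + g2^2 * ((k + σ) / (k - σ))) :=
    nonneg_of_mul_nonneg_right main pos
  rcases hσ with h | h
  · subst h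
    nlinarith [mul_le_mul_of_nonneg_left c1 (sq_nonneg g1), mul_le_mul_of_nonneg_left c2 (sq_nonneg g2)]
  · subst h
    have e1 : k - -1 = k + 1 := by ring
    have e2 : k + -1 = k - 1 := by ring
    rw [e1, e2] at main2
    nlinarith [mul_le_mul_of_nonneg_left c2 (sq_nonneg g1), mul_le_mul_of_nonneg_left c1 (sq_nonneg g2)]

lemma NSurf.touch_log (S : NSurf F N E σ) {ψ : R2 → ℝ} (sψ : Sm ψ) {K κ : ℝ} (hκ : 1 < κ) (x y : R2)
    (hZ : ∀ x y, 0 ≤ K * exp (ψ x) / E x * (1 - ⟪F x, F y⟫) + ⟪N x, F y⟫)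
    (h0 : K * exp (ψ x) / E x * (1 - ⟪F x, F y⟫) + ⟪N x, F y⟫ = 0) (hD : 0 < 1 - ⟪F x, F y⟫)
    (hk : κ ≤ K * exp (ψ x)) :
    (κ - 1) / (κ + 1) * ((dd e1 ψ x - dd e1 E x * (E x)⁻¹)^2 + (dd e2 ψ x - dd e2 E x * (E x)⁻¹)^2)
      ≤ dd e1 (dd e1 ψ) x + dd e2 (dd e2 ψ) x := by
  have hEn : ∀ p, E p ≠ 0 := fun p => (S.Epos p).ne'
  obtain ⟨t1, t2, t3⟩ := S.touching (sm_Phi sψ S.sE hEn K) x y hZ h0 hD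
  rw [dd_Phi sψ S.sE hEn] at t1 t2
  rw [dd_Phi sψ S.sE hEn, dd_Phi sψ S.sE hEn, dd_dd_Phi sψ S.sE hEn, dd_dd_Phi sψ S.sE hEn] at t3
  have hE := S.Epos x
  refine alg_aux hE S.sig hκ hk hD t1 t2 ?_
  refine t3.trans (le_of_eq ?_)
  congr 2
  have g : (dd e1 (dd e1 E) x + dd e2 (dd e2 E) x) * (E x)⁻¹
    - ((dd e1 E x)^2 + (dd e2 E x)^2) * ((E x)⁻¹)^2 = 2 / E x - 2 * E x := by
    have := S.gauss x
    field_simp; linarith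
  rw [← g]; ring

/-! the barrier -/
def bar (ε α : ℝ) (p x : R2) : ℝ := -ε * exp (-α * q2 x p)

lemma sm_q2 (p : R2) : Sm (fun x => q2 x p) := by unfold q2 Sm; fun_prop

lemma sm_bar (ε α : ℝ) (p : R2) : Sm (bar ε α p) := by
  unfold bar q2 Sm; fun_prop

lemma dd_q2 (p v x : R2) : dd v (fun x => q2 x p) x = 2 * ((x.1 - p.1) * v.1 + (x.2 - p.2) * v.2) := by
  have l := dd_line (sm_q2 p) x v 0
  simp only [zero_smul, add_zero] at l
  have l2 : HasDerivAt (fun τ : ℝ => q2 (x + τ • v) p)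
      (2 * ((x.1 - p.1) * v.1 + (x.2 - p.2) * v.2)) 0 := by
    have a1 : HasDerivAt (fun τ : ℝ => (x.1 + τ * v.1 - p.1)) v.1 0 := by
      simpa using (((hasDerivAt_id (0:ℝ)).mul_const v.1).const_add x.1).sub_const p.1
    have a2 : HasDerivAt (fun τ : ℝ => (x.2 + τ * v.2 - p.2)) v.2 0 := by
      simpa using (((hasDerivAt_id (0:ℝ)).mul_const v.2).const_add x.2).sub_const p.2
    have := (a1.pow 2).add (a2.pow 2)
    refine (this.congr_deriv (by simp; ring)).congr_of_eventuallyEq (Filter.Eventually.of_forall fun τ => ?_)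
    simp [q2]
  exact l.unique l2

lemma dd_bar (ε α : ℝ) (p v x : R2) : dd v (bar ε α p) x
    = - α * bar ε α p x * (2 * ((x.1 - p.1) * v.1 + (x.2 - p.2) * v.2)) := by
  have h : HasDerivAt (fun y => -ε * exp (-α * y)) (-ε * (exp (-α * q2 x p) * (-α))) (q2 x p) := by
    have := ((hasDerivAt_id (q2 x p)).const_mul (-α)).exp.const_mul (-ε)
    simpa using this
  have := dd_comp (sm_q2 p) v x h
  have e : bar ε α p = fun q => -ε * exp (-α * q2 q p) := rfl
  rw [e, this, dd_q2]; ring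

lemma dd_lin2 (p v x : R2) : dd v (fun x : R2 => 2 * ((x.1 - p.1) * v.1 + (x.2 - p.2) * v.2)) x
    = 2 * (v.1^2 + v.2^2) := by
  have sm : Sm (fun x : R2 => 2 * ((x.1 - p.1) * v.1 + (x.2 - p.2) * v.2)) := by unfold Sm; fun_prop
  have l := dd_line sm x v 0
  simp only [zero_smul, add_zero] at l
  refine l.unique ?_
  have a1 : HasDerivAt (fun τ : ℝ => (x.1 + τ * v.1 - p.1)) v.1 0 := by
    simpa using (((hasDerivAt_id (0:ℝ)).mul_const v.1).const_add x.1).sub_const p.1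
  have a2 : HasDerivAt (fun τ : ℝ => (x.2 + τ * v.2 - p.2)) v.2 0 := by
    simpa using (((hasDerivAt_id (0:ℝ)).mul_const v.2).const_add x.2).sub_const p.2
  have := ((a1.mul_const v.1).add (a2.mul_const v.2)).const_mul 2
  refine (this.congr_deriv (by ring)).congr_of_eventuallyEq (Filter.Eventually.of_forall fun τ => ?_)
  simp

lemma dd_dd_bar (ε α : ℝ) (p v x : R2) : dd v (dd v (bar ε α p)) x
    = bar ε α p x * (α^2 * (2 * ((x.1 - p.1) * v.1 + (x.2 - p.2) * v.2))^2 - 2 * α * (v.1^2 + v.2^2)) := by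
  have e : dd v (bar ε α p) = fun x => (- α * bar ε α p x) * (2 * ((x.1 - p.1) * v.1 + (x.2 - p.2) * v.2)) :=
    funext fun x => dd_bar ε α p v x
  have sm : Sm (fun x : R2 => 2 * ((x.1 - p.1) * v.1 + (x.2 - p.2) * v.2)) := by unfold Sm; fun_prop
  have s1 : Sm (fun x => - α * bar ε α p x) := contDiff_const.mul (sm_bar ε α p)
  rw [e, dd_mul s1 sm, dd_lin2, dd_mul contDiff_const (sm_bar ε α p), dd_const, dd_bar]
  ring

set_option maxHeartbeats 4000000 in
lemma NSurf.dichotomy (S : NSurf F N E σ) :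
    (∀ x, dd e1 E x = 0 ∧ dd e2 E x = 0) ∨
    (∀ x y, 0 ≤ 1 / E x * (1 - ⟪F x, F y⟫) + ⟪N x, F y⟫) := by
  by_contra hcon
  push Not at hcon
  obtain ⟨⟨p, hp⟩, x0, y0, hneg⟩ := hcon
  have hE := S.Epos
  have hEn : ∀ p, E p ≠ 0 := fun p => (S.Epos p).ne'
  have hD0 : 0 < 1 - ⟪F x0, F y0⟫ := by
    refine lt_of_le_of_ne (S.D_nonneg _ _) fun h => ?_
    rw [← h, ← S.D_zero h.symm, real_inner_comm, S.FN] at hneg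
    simp at hneg
  obtain ⟨κ₁, hκ1def⟩ : ∃ κ₁, κ₁ = - ⟪N x0, F y0⟫ * E x0 / (1 - ⟪F x0, F y0⟫) := ⟨_, rfl⟩
  have hκ1 : 1 < κ₁ := by
    rw [hκ1def, lt_div_iff₀ hD0]
    have h := mul_neg_of_neg_of_pos hneg (hE x0)
    have e : (1 / E x0 * (1 - ⟪F x0, F y0⟫) + ⟪N x0, F y0⟫) * E x0
      = (1 - ⟪F x0, F y0⟫) + ⟪N x0, F y0⟫ * E x0 := by have := hEn x0; field_simp
    linarith
  obtain ⟨κ, hκdef⟩ : ∃ κ, κ = (1 + κ₁) / 2 := ⟨_, rfl⟩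
  have hκ : 1 < κ := by linarith
  have hκlt : κ < κ₁ := by linarith
  set G : R2 → ℝ := fun x => (dd e1 E x * (E x)⁻¹)^2 + (dd e2 E x * (E x)⁻¹)^2 with hG
  have cG : Continuous G := by
    have c1 := (S.sE.dd e1).continuous
    have c2 := (S.sE.dd e2).continuous
    have c3 := (S.sE.inv' hEn).continuous
    fun_prop
  have hGp : 0 < G p := by
    have hi := inv_pos.2 (hE p)
    by_cases h1 : dd e1 E p = 0
    · have h2 := hp h1
      have : dd e2 E p * (E p)⁻¹ ≠ 0 := mul_ne_zero h2 hi.ne'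
      simp only [hG]; positivity
    · have : dd e1 E p * (E p)⁻¹ ≠ 0 := mul_ne_zero h1 hi.ne'
      simp only [hG]; positivity
  obtain ⟨m, hm0, hmG⟩ : ∃ m, 0 < m ∧ m < G p := ⟨G p / 2, by linarith, by linarith⟩
  obtain ⟨r, hr, hrG⟩ : ∃ r, 0 < r ∧ ∀ x, q2 x p ≤ r → m < G x := by
    obtain ⟨d, hd, hball⟩ := Metric.isOpen_iff.1 (isOpen_lt continuous_const cG : IsOpen {x | m < G x}) p hmG
    refine ⟨d^2 / 4, by positivity, fun x hx => hball ?_⟩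
    rw [Metric.mem_ball, Prod.dist_eq, Real.dist_eq, Real.dist_eq]
    unfold q2 at hx
    have b1 : |x.1 - p.1| < d := abs_lt_of_sq_lt_sq (by nlinarith [sq_nonneg (x.2 - p.2)]) hd.le
    have b2 : |x.2 - p.2| < d := abs_lt_of_sq_lt_sq (by nlinarith [sq_nonneg (x.1 - p.1)]) hd.le
    exact max_lt b1 b2
  obtain ⟨α, hα⟩ : ∃ α, α = 1 / r := ⟨_, rfl⟩
  have hα0 : 0 < α := by rw [hα]; positivity
  have hαr : α * r = 1 := by rw [hα]; field_simp
  obtain ⟨c0, hc0⟩ : ∃ c0, c0 = (κ - 1) / (κ + 1) := ⟨_, rfl⟩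
  have hc0p : 0 < c0 := by rw [hc0]; exact div_pos (by linarith) (by linarith)
  have hc01 : c0 < 1 := by rw [hc0, div_lt_one (by linarith)]; linarith
  obtain ⟨ε, hε0, hε1, hεm, hεκ⟩ : ∃ ε, 0 < ε ∧ ε ≤ 1 ∧ ε ≤ c0 * m / (32 * α) ∧ ε ≤ Real.log (κ₁ / κ) := by
    have hl : 0 < Real.log (κ₁ / κ) := Real.log_pos (by rw [one_lt_div (by linarith)]; exact hκlt)
    refine ⟨min 1 (min (c0 * m / (32 * α)) (Real.log (κ₁ / κ))), ?_, min_le_left _ _, ?_, ?_⟩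
    · have : 0 < c0 * m / (32 * α) := by positivity
      exact lt_min one_pos (lt_min this hl)
    · exact (min_le_right _ _).trans (min_le_left _ _)
    · exact (min_le_right _ _).trans (min_le_right _ _)
  have hq0 : ∀ x, 0 ≤ q2 x p := fun x => by unfold q2; positivity
  have hbar : ∀ x, -ε ≤ bar ε α p x ∧ bar ε α p x < 0 := by
    intro x
    have h1 : exp (-α * q2 x p) ≤ 1 := by
      rw [Real.exp_le_one_iff]; nlinarith [hq0 x, mul_nonneg hα0.le (hq0 x)]
    have h2 := Real.exp_pos (-α * q2 x p)
    unfold bar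
    constructor <;> nlinarith
  obtain ⟨ρ, hρ⟩ := S.cpt
  obtain ⟨K, hK1, hZ, x, y, hD, h0⟩ := S.extremal (κ := κ) (κ₁ := κ₁) (ρ := ρ) hκ p
    (fun x => exp (bar ε α p x)) (sm_bar ε α p).exp.continuous (fun x => Real.exp_pos _)
    (fun x => by rw [Real.exp_le_one_iff]; exact (hbar x).2.le)
    (fun x => by
      have h1 : exp (-Real.log (κ₁ / κ)) ≤ exp (bar ε α p x) :=
        Real.exp_le_exp.2 (by linarith [(hbar x).1])
      rw [Real.exp_neg, Real.exp_log (div_pos (by linarith) (by linarith))] at h1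
      have hk : 0 < κ₁ := by linarith
      have h2 : κ = κ₁ * (κ₁ / κ)⁻¹ := by field_simp
      calc κ = κ₁ * (κ₁ / κ)⁻¹ := h2
        _ ≤ _ := mul_le_mul_of_nonneg_left h1 hk.le)
    hκlt
    (fun x => by
      by_cases hx : q2 x p ≤ ρ
      · exact ⟨0, by simp, by simpa using hx, by simp⟩
      · obtain ⟨l, hl, hl2⟩ := hρ x p
        refine ⟨l, hl, hl2, Real.exp_le_exp.2 ?_⟩
        unfold bar
        have : exp (-α * q2 x p) ≤ exp (-α * q2 (x + l) p) := by
          apply Real.exp_le_exp.2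
          push Not at hx
          nlinarith
        nlinarith)
    x0 y0 hD0 (by
      have := hEn x0
      have hd := hD0.ne'
      rw [hκ1def]; apply le_of_eq; field_simp; ring)
  have hk : κ ≤ K * exp (bar ε α p x) := by
    have h1 : exp (-Real.log (κ₁ / κ)) ≤ exp (bar ε α p x) :=
      Real.exp_le_exp.2 (by linarith [(hbar x).1])
    rw [Real.exp_neg, Real.exp_log (div_pos (by linarith) (by linarith))] at h1
    have hk : 0 < κ₁ := by linarith
    have h2 : κ = κ₁ * (κ₁ / κ)⁻¹ := by field_simp
    calc κ = κ₁ * (κ₁ / κ)⁻¹ := h2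
      _ ≤ κ₁ * exp (bar ε α p x) := mul_le_mul_of_nonneg_left h1 hk.le
      _ ≤ _ := mul_le_mul_of_nonneg_right hK1 (Real.exp_pos _).le
  have fin := S.touch_log (sm_bar ε α p) hκ x y hZ h0 hD hk
  rw [← hc0] at fin
  have lapb : dd e1 (dd e1 (bar ε α p)) x + dd e2 (dd e2 (bar ε α p)) x
      = bar ε α p x * (4 * α) * (α * q2 x p - 1) := by
    rw [dd_dd_bar, dd_dd_bar]; simp only [q2]; ring
  rw [lapb] at fin
  obtain ⟨hb1, hb2⟩ := hbar x
  by_cases hx : q2 x p ≤ r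
  · have hGx := hrG x hx
    have hs : α * q2 x p ≤ 1 := by rw [← hαr]; exact mul_le_mul_of_nonneg_left hx hα0.le
    have hs0 : 0 ≤ α * q2 x p := mul_nonneg hα0.le (hq0 x)
    have gradb : (dd e1 (bar ε α p) x)^2 + (dd e2 (bar ε α p) x)^2 ≤ 4 * α * ε := by
      rw [dd_bar, dd_bar]
      have : (-α * bar ε α p x * (2 * ((x.1 - p.1) * (e1 : R2).1 + (x.2 - p.2) * (e1 : R2).2)))^2
        + (-α * bar ε α p x * (2 * ((x.1 - p.1) * (e2 : R2).1 + (x.2 - p.2) * (e2 : R2).2)))^2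
        = 4 * α * (bar ε α p x)^2 * (α * q2 x p) := by simp only [q2]; ring
      rw [this]
      have h2 : (bar ε α p x)^2 ≤ ε := by
        have h5 : (-bar ε α p x) * (-bar ε α p x) ≤ ε * 1 :=
          mul_le_mul (by linarith) (by linarith) (by linarith) hε0.le
        linarith [sq (bar ε α p x)]
      have h3 : (bar ε α p x)^2 * (α * q2 x p) ≤ ε * 1 :=
        mul_le_mul h2 hs hs0 hε0.le
      have h4 := mul_le_mul_of_nonneg_left h3 hα0.le
      linarith
    have lower : G x / 2 - 4 * α * ε ≤ (dd e1 (bar ε α p) x - dd e1 E x * (E x)⁻¹)^2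
        + (dd e2 (bar ε α p) x - dd e2 E x * (E x)⁻¹)^2 := by
      simp only [hG]
      nlinarith [sq_nonneg (2 * dd e1 (bar ε α p) x - dd e1 E x * (E x)⁻¹),
        sq_nonneg (2 * dd e2 (bar ε α p) x - dd e2 E x * (E x)⁻¹)]
    have upper : bar ε α p x * (4 * α) * (α * q2 x p - 1) ≤ 4 * α * ε := by
      have : (-bar ε α p x) * (1 - α * q2 x p) ≤ ε * 1 :=
        mul_le_mul (by linarith) (by linarith) (by linarith) hε0.le
      have h4 := mul_le_mul_of_nonneg_left this hα0.le
      linarith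
    have he : 32 * α * ε ≤ c0 * m := by
      rw [le_div_iff₀ (by positivity)] at hεm; linarith
    have f1 := mul_le_mul_of_nonneg_left lower hc0p.le
    have f2 : c0 * (4 * α * ε) ≤ 1 * (4 * α * ε) :=
      mul_le_mul_of_nonneg_right hc01.le (by positivity)
    have f3 : c0 * m < c0 * G x := mul_lt_mul_of_pos_left hGx hc0p
    have f4 : 0 < α * ε := by positivity
    linarith
  · push Not at hx
    have hs : 1 < α * q2 x p := by rw [← hαr]; exact mul_lt_mul_of_pos_left hx hα0
    have neg : bar ε α p x * (4 * α) * (α * q2 x p - 1) < 0 :=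
      mul_neg_of_neg_of_pos (mul_neg_of_neg_of_pos hb2 (by linarith)) (by linarith)
    have : 0 ≤ c0 * ((dd e1 (bar ε α p) x - dd e1 E x * (E x)⁻¹)^2
        + (dd e2 (bar ε α p) x - dd e2 E x * (E x)⁻¹)^2) := by positivity
    linarith

end part5

section part6

section final1
variable {F N : R2 → E4} {E : R2 → ℝ} {σ : ℝ}

lemma NSurf.neg (S : NSurf F N E σ) : NSurf F (fun p => - N p) E (-σ) where
  sF := S.sF
  sN := S.sN.neg
  sE := S.sE
  hσ := by rw [neg_sq]; exact S.hσ
  Epos := S.Epos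
  FF := S.FF
  NN p := by rw [inner_neg_neg]; exact S.NN p
  FN p := by rw [inner_neg_right, S.FN, neg_zero]
  FX := S.FX
  FY := S.FY
  NX p := by rw [inner_neg_left, S.NX, neg_zero]
  NY p := by rw [inner_neg_left, S.NY, neg_zero]
  XX := S.XX
  YY := S.YY
  XY := S.XY
  h11 p := by rw [inner_neg_right, S.h11]
  h12 p := by rw [inner_neg_right, S.h12, neg_zero]
  h22 p := by rw [inner_neg_right, S.h22]
  N1 p := by rw [dd_neg, S.N1]; module
  N2 p := by rw [dd_neg, S.N2]; module
  lapF := S.lapF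
  lapN p := by
    have h : ∀ v, dd v (fun p => - N p) = fun p => - dd v N p := fun v => funext fun p => dd_neg v p
    rw [h, h, dd_neg, dd_neg, ← neg_add, S.lapN]; module
  gauss := S.gauss
  emb := S.emb
  cpt := S.cpt
  per l hl r := by
    obtain ⟨a, b⟩ := S.per l hl r
    exact ⟨by rw [a], b⟩

lemma NSurf.third (S : NSurf F N E σ)
    (hA : ∀ x y, 0 ≤ 1 / E x * (1 - ⟪F x, F y⟫) + ⟪N x, F y⟫) (x v : R2)
    (hF : ⟪F x, dd v F x⟫ = 0) (hN : ⟪N x, dd v F x⟫ = 0)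
    (h2 : - (1 / E x) * ⟪F x, dd v (dd v F) x⟫ + ⟪N x, dd v (dd v F) x⟫ = 0) :
    - (1 / E x) * ⟪F x, dd v (dd v (dd v F)) x⟫ + ⟪N x, dd v (dd v (dd v F)) x⟫ = 0 := by
  have der : ∀ (f : R2 → E4), Sm f → ∀ (w : E4) τ, HasDerivAt (fun τ : ℝ => ⟪w, f (x + τ • v)⟫)
      ⟪w, dd v f (x + τ • v)⟫ τ := by
    intro f hf w τ
    have := (hasDerivAt_const τ w).inner ℝ (dd_line hf x v τ)
    simpa using this
  have s1 := S.sF.dd v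
  have s2 := s1.dd v
  refine third_deriv_zero (f := fun τ => 1 / E x * (1 - ⟪F x, F (x + τ • v)⟫) + ⟪N x, F (x + τ • v)⟫)
    (f' := fun τ => - (1 / E x) * ⟪F x, dd v F (x + τ • v)⟫ + ⟪N x, dd v F (x + τ • v)⟫)
    (f'' := fun τ => - (1 / E x) * ⟪F x, dd v (dd v F) (x + τ • v)⟫ + ⟪N x, dd v (dd v F) (x + τ • v)⟫)
    ?_ ?_ ?_ ?_ ?_ ?_ ?_
  · intro τ
    exact ((((der F S.sF (F x) τ).const_sub 1).const_mul (1 / E x)).add (der F S.sF (N x) τ)).congr_deriv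
      (by ring)
  · intro τ
    exact ((der _ s1 (F x) τ).const_mul (-(1 / E x))).add (der _ s1 (N x) τ)
  · have := ((der _ s2 (F x) 0).const_mul (-(1 / E x))).add (der _ s2 (N x) 0)
    simp only [zero_smul, add_zero] at this
    exact this
  · simp only [zero_smul, add_zero]
    rw [S.FF, real_inner_comm, S.FN]; ring
  · simp only [zero_smul, add_zero]
    rw [hF, hN]; ring
  · simp only [zero_smul, add_zero]
    exact h2
  · intro τ; exact hA _ _

lemma NSurf.third_e2 (S : NSurf F N E 1)
    (hA : ∀ x y, 0 ≤ 1 / E x * (1 - ⟪F x, F y⟫) + ⟪N x, F y⟫) (x : R2) : dd e2 E x = 0 := by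
  have hE := (S.Epos x).ne'
  have sF2 := S.sF.dd e2
  have t := S.third hA x e2 (S.FY x) (S.NY x)
    (by rw [S.FF22, real_inner_comm, S.h22]; field_simp; ring)
  have a := dd_inner sF2 sF2 e2 x
  rw [dd_eq_const S.YY, real_inner_comm (dd e2 F x)] at a
  have b := dd_inner S.sF (sF2.dd e2) e2 x
  rw [dd_eq_const S.FF22, dd_neg] at b
  have c := dd_inner (sF2.dd e2) S.sN e2 x
  rw [dd_const_of S.h22, S.N2, inner_smul_right] at c
  rw [real_inner_comm] at c
  rw [real_inner_comm (dd e2 F x)] at c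
  have b' : ⟪F x, dd e2 (dd e2 (dd e2 F)) x⟫ = -(3/2) * dd e2 E x := by linarith
  have c' : ⟪N x, dd e2 (dd e2 (dd e2 F)) x⟫ = - (1 / E x * (dd e2 E x / 2)) := by
    have : ⟪dd e2 F x, dd e2 (dd e2 F) x⟫ = dd e2 E x / 2 := by linarith
    rw [this] at c
    linear_combination -c
  rw [b', c'] at t
  field_simp at t
  linarith

lemma NSurf.third_e1 (S : NSurf F N E (-1))
    (hA : ∀ x y, 0 ≤ 1 / E x * (1 - ⟪F x, F y⟫) + ⟪N x, F y⟫) (x : R2) : dd e1 E x = 0 := by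
  have hE := (S.Epos x).ne'
  have sF2 := S.sF.dd e1
  have t := S.third hA x e1 (S.FX x) (S.NX x)
    (by rw [S.FF11, real_inner_comm, S.h11]; field_simp; ring)
  have a := dd_inner sF2 sF2 e1 x
  rw [dd_eq_const S.XX, real_inner_comm (dd e1 F x)] at a
  have b := dd_inner S.sF (sF2.dd e1) e1 x
  rw [dd_eq_const S.FF11, dd_neg] at b
  have c := dd_inner (sF2.dd e1) S.sN e1 x
  rw [dd_const_of S.h11, S.N1, inner_smul_right] at c
  rw [real_inner_comm] at c
  rw [real_inner_comm (dd e1 F x)] at c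
  have b' : ⟪F x, dd e1 (dd e1 (dd e1 F)) x⟫ = -(3/2) * dd e1 E x := by linarith
  have c' : ⟪N x, dd e1 (dd e1 (dd e1 F)) x⟫ = - (1 / E x * (dd e1 E x / 2)) := by
    have : ⟪dd e1 F x, dd e1 (dd e1 F) x⟫ = dd e1 E x / 2 := by linarith
    rw [this] at c
    linear_combination -c
  rw [b', c'] at t
  field_simp at t
  linarith

lemma NSurf.E_grad (S : NSurf F N E 1) : ∀ x, dd e1 E x = 0 ∧ dd e2 E x = 0 := by
  rcases S.dichotomy with h | h
  · exact h
  rcases S.neg.dichotomy with h' | h'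
  · exact h'
  exact fun x => ⟨S.neg.third_e1 h' x, S.third_e2 h x⟩

lemma NSurf.E_one (S : NSurf F N E 1) (p : R2) : E p = 1 := by
  have g := S.gauss p
  have h := S.E_grad
  rw [dd_const_of (fun x => (h x).1), dd_const_of (fun x => (h x).2), (h p).1, (h p).2] at g
  have hE := S.Epos p
  have : E p * ((1 + E p) * (1 - E p)) = 0 := by linarith
  rcases mul_eq_zero.1 this with h | h
  · linarith
  rcases mul_eq_zero.1 h with h | h <;> linarith

lemma ode_sol {f f' : ℝ → E4} (h1 : ∀ τ, HasDerivAt f (f' τ) τ)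
    (h2 : ∀ τ, HasDerivAt f' ((-2:ℝ) • f τ) τ) (τ : ℝ) :
    f τ = cos (√2 * τ) • f 0 + (sin (√2 * τ) / √2) • f' 0 := by
  have s0 : √2 ≠ 0 := by positivity
  have s2 : √2 * √2 = 2 := Real.mul_self_sqrt (by norm_num)
  have hc : ∀ τ, HasDerivAt (fun τ => cos (√2 * τ)) (- √2 * sin (√2 * τ)) τ := fun τ => by
    have := ((hasDerivAt_id τ).const_mul (√2)).cos
    exact this.congr_deriv (by simp; ring)
  have hs : ∀ τ, HasDerivAt (fun τ => sin (√2 * τ) / √2) (cos (√2 * τ)) τ := fun τ => by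
    have := (((hasDerivAt_id τ).const_mul (√2)).sin).div_const (√2)
    exact this.congr_deriv (by simp)
  have hs' : ∀ τ, HasDerivAt (fun τ => sin (√2 * τ) * √2) (2 * cos (√2 * τ)) τ := fun τ => by
    have := (((hasDerivAt_id τ).const_mul (√2)).sin).mul_const (√2)
    exact this.congr_deriv (by simp; linear_combination cos (√2 * τ) * s2)
  have k1 : ∀ τ, HasDerivAt (fun τ => cos (√2 * τ) • f τ - (sin (√2 * τ) / √2) • f' τ) 0 τ := fun τ => by
    have := ((hc τ).smul (h1 τ)).sub ((hs τ).smul (h2 τ))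
    refine this.congr_deriv ?_
    have e : sin (√2 * τ) / √2 * 2 = √2 * sin (√2 * τ) := by
      field_simp; linear_combination -sin (√2 * τ) * s2
    rw [smul_smul]
    have e2 : sin (√2 * τ) / √2 * -2 = - (√2 * sin (√2 * τ)) := by linarith
    rw [e2]; module
  have k2 : ∀ τ, HasDerivAt (fun τ => (sin (√2 * τ) * √2) • f τ + cos (√2 * τ) • f' τ) 0 τ := fun τ => by
    have := ((hs' τ).smul (h1 τ)).add ((hc τ).smul (h2 τ))
    refine this.congr_deriv ?_
    module
  have c1 := is_const_of_deriv_eq_zero (fun τ => (k1 τ).differentiableAt) (fun τ => (k1 τ).deriv) τ 0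
  have c2 := is_const_of_deriv_eq_zero (fun τ => (k2 τ).differentiableAt) (fun τ => (k2 τ).deriv) τ 0
  simp only [mul_zero, cos_zero, sin_zero, zero_div, zero_smul, one_smul, sub_zero, zero_mul, zero_add] at c1 c2
  rw [← c1, ← c2]
  have p := Real.sin_sq_add_cos_sq (√2 * τ)
  have e : sin (√2 * τ) / √2 * (sin (√2 * τ) * √2) = sin (√2 * τ)^2 := by field_simp
  rw [smul_sub, smul_add, smul_smul, smul_smul, smul_smul, smul_smul, e]
  have e3 : cos (√2 * τ) * cos (√2 * τ) = 1 - sin (√2 * τ)^2 := by linarith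
  rw [e3]; module

lemma NSurf.formula (S : NSurf F N E 1) (s t : ℝ) :
    F (s, t) = (1 / √2 * cos (√2 * s)) • ((1 / √2) • (F 0 - N 0)) + (1 / √2 * sin (√2 * s)) • dd e1 F 0
      + (1 / √2 * cos (√2 * t)) • ((1 / √2) • (F 0 + N 0)) + (1 / √2 * sin (√2 * t)) • dd e2 F 0 := by
  have hE := S.E_one
  have n1 : ∀ p, dd e1 N p = - dd e1 F p := fun p => by rw [S.N1, hE]; module
  have n2 : ∀ p, dd e2 N p = dd e2 F p := fun p => by rw [S.N2, hE]; module
  have lf : ∀ p, dd e1 (dd e1 F) p + dd e2 (dd e2 F) p = (-2:ℝ) • F p := fun p => by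
    rw [S.lapF, hE]; module
  have ln : ∀ p, -dd e1 (dd e1 F) p + dd e2 (dd e2 F) p = (-2:ℝ) • N p := fun p => by
    have := S.lapN p
    rw [dd_eq_const n1, dd_eq_const n2, dd_neg, hE] at this
    rw [this]; module
  have f11 : ∀ p, dd e1 (dd e1 F) p = N p - F p := fun p => by
    have : (2:ℝ) • dd e1 (dd e1 F) p = (2:ℝ) • (N p - F p) := by
      have h : (2:ℝ) • dd e1 (dd e1 F) p = (dd e1 (dd e1 F) p + dd e2 (dd e2 F) p)
        - (-dd e1 (dd e1 F) p + dd e2 (dd e2 F) p) := by module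
      rw [h, lf, ln]; module
    exact smul_right_injective _ (two_ne_zero) this
  have f22 : ∀ p, dd e2 (dd e2 F) p = - N p - F p := fun p => by
    have : (2:ℝ) • dd e2 (dd e2 F) p = (2:ℝ) • (- N p - F p) := by
      have h : (2:ℝ) • dd e2 (dd e2 F) p = (dd e1 (dd e1 F) p + dd e2 (dd e2 F) p)
        + (-dd e1 (dd e1 F) p + dd e2 (dd e2 F) p) := by module
      rw [h, lf, ln]; module
    exact smul_right_injective _ (two_ne_zero) this
  have lF := fun p v => dd_line S.sF p v
  have lN := fun p v => dd_line S.sN p v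
  have A1 : F (s, t) - N (s, t) = F (s, 0) - N (s, 0) := by
    have k : ∀ τ : ℝ, HasDerivAt (fun τ : ℝ => F ((s,0) + τ • e2) - N ((s,0) + τ • e2)) 0 τ := fun τ =>
      ((lF _ _ τ).sub (lN _ _ τ)).congr_deriv (by rw [n2]; simp)
    have := is_const_of_deriv_eq_zero (fun τ => (k τ).differentiableAt) (fun τ => (k τ).deriv) t 0
    simpa using this
  have B1 : F (s, t) + N (s, t) = F (0, t) + N (0, t) := by
    have k : ∀ τ : ℝ, HasDerivAt (fun τ : ℝ => F ((0,t) + τ • e1) + N ((0,t) + τ • e1)) 0 τ := fun τ =>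
      ((lF _ _ τ).add (lN _ _ τ)).congr_deriv (by rw [n1]; simp)
    have := is_const_of_deriv_eq_zero (fun τ => (k τ).differentiableAt) (fun τ => (k τ).deriv) s 0
    simpa using this
  have A2 := ode_sol (f := fun τ : ℝ => F (0 + τ • e1) - N (0 + τ • e1))
    (f' := fun τ => (2:ℝ) • dd e1 F (0 + τ • e1))
    (fun τ => ((lF _ _ τ).sub (lN _ _ τ)).congr_deriv (by rw [n1]; module))
    (fun τ => ((dd_line (S.sF.dd e1) 0 e1 τ).const_smul (2:ℝ)).congr_deriv (by rw [f11]; module)) s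
  have B2 := ode_sol (f := fun τ : ℝ => F (0 + τ • e2) + N (0 + τ • e2))
    (f' := fun τ => (2:ℝ) • dd e2 F (0 + τ • e2))
    (fun τ => ((lF _ _ τ).add (lN _ _ τ)).congr_deriv (by rw [n2]; module))
    (fun τ => ((dd_line (S.sF.dd e2) 0 e2 τ).const_smul (2:ℝ)).congr_deriv (by rw [f22]; module)) t
  simp only [zero_add, zero_smul] at A2 B2
  have ee1 : s • e1 = (s, (0:ℝ)) := by simp
  have ee2 : t • e2 = ((0:ℝ), t) := by simp
  rw [ee1, ← A1] at A2
  rw [ee2, ← B1] at B2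
  have s2 : (1 / √2) * (1 / √2) = 1 / 2 := by
    rw [div_mul_div_comm, Real.mul_self_sqrt (by norm_num)]; norm_num
  have : F (s, t) = (1/2 : ℝ) • (F (s, t) - N (s, t)) + (1/2 : ℝ) • (F (s, t) + N (s, t)) := by module
  rw [this, A2, B2]
  have q1 : ∀ c : ℝ, 1 / √2 * c * (1 / √2) = 1 / 2 * c := fun c => by linear_combination c * s2
  simp only [smul_add, smul_smul, q1]
  have q3 : ∀ c : ℝ, 1 / 2 * (c / √2 * 2) = 1 / √2 * c := fun c => by ring
  rw [q3, q3]; module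

lemma exists_angle {a b : ℝ} (h : a^2 + b^2 = 1/2) : ∃ θ : ℝ, a = 1 / √2 * cos (√2 * θ) ∧ b = 1 / √2 * sin (√2 * θ) := by
  have s0 : √2 ≠ 0 := by positivity
  have s2 : √2 * √2 = 2 := Real.mul_self_sqrt (by norm_num)
  set z : ℂ := ⟨√2 * a, √2 * b⟩ with hz
  have hn : ‖z‖ = 1 := by
    have : ‖z‖^2 = 1 := by
      rw [← Complex.normSq_eq_norm_sq, Complex.normSq_apply]
      simp only [hz]; linear_combination (a^2+b^2) * s2 + 2 * h
    nlinarith [norm_nonneg z]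
  have hz0 : z ≠ 0 := by rw [← norm_pos_iff, hn]; norm_num
  refine ⟨z.arg / √2, ?_, ?_⟩
  · rw [mul_div_cancel₀ _ s0, Complex.cos_arg hz0, hn]; simp only [hz]; field_simp
  · rw [mul_div_cancel₀ _ s0, Complex.sin_arg, hn]; simp only [hz]; field_simp

lemma NSurf.clifford (S : NSurf F N E 1) : ∃ Q : E4 ≃ₗᵢ[ℝ] E4, range F = Q '' cliffordTorus := by
  have s0 : √2 ≠ 0 := by positivity
  have s2 : (1 / √2) * (1 / √2) = 1 / 2 := by
    rw [div_mul_div_comm, Real.mul_self_sqrt (by norm_num)]; norm_num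
  have s2' : (√2)⁻¹ * (√2)⁻¹ = 1 / 2 := by simpa using s2
  have hE := S.E_one 0
  have FF := S.FF 0
  have NN := S.NN 0
  have XX := S.XX 0
  have YY := S.YY 0
  rw [hE] at XX YY
  have FN := S.FN 0
  have FX := S.FX 0
  have FY := S.FY 0
  have NX := S.NX 0
  have NY := S.NY 0
  have XY := S.XY 0
  have NF : ⟪N 0, F 0⟫ = 0 := by rw [real_inner_comm]; exact FN
  have XF : ⟪dd e1 F 0, F 0⟫ = 0 := by rw [real_inner_comm]; exact FX
  have YF : ⟪dd e2 F 0, F 0⟫ = 0 := by rw [real_inner_comm]; exact FY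
  have XN : ⟪dd e1 F 0, N 0⟫ = 0 := by rw [real_inner_comm]; exact NX
  have YN : ⟪dd e2 F 0, N 0⟫ = 0 := by rw [real_inner_comm]; exact NY
  have YX : ⟪dd e2 F 0, dd e1 F 0⟫ = 0 := by rw [real_inner_comm]; exact XY
  have form := S.formula
  generalize dd e1 F 0 = X at *
  generalize dd e2 F 0 = Y at *
  generalize N 0 = n at *
  generalize F 0 = P at *
  have ho : Orthonormal ℝ ![(1 / √2) • (P - n), X, (1 / √2) • (P + n), Y] := by
    rw [orthonormal_iff_ite]
    intro i j
    fin_cases i <;> fin_cases j <;>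
      simp [inner_smul_left, inner_smul_right, inner_sub_left, inner_sub_right, inner_add_left,
        inner_add_right, FN, FX, FY, NX, NY, XY, NF, XF, YF, XN, YN, YX,
        FF, NN, XX, YY, -inner_self_eq_norm_sq_to_K] <;> linarith
  have hspan : ⊤ ≤ Submodule.span ℝ (range ![(1 / √2) • (P - n), X, (1 / √2) • (P + n), Y]) := by
    rw [ho.linearIndependent.span_eq_top_of_card_eq_finrank (by simp)]
  let b := OrthonormalBasis.mk ho hspan
  have hQ : ∀ x : E4, b.repr.symm x = x 0 • ((1 / √2) • (P - n)) + x 1 • X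
      + x 2 • ((1 / √2) • (P + n)) + x 3 • Y := by
    intro x
    rw [← b.sum_repr_symm]
    simp [b, Fin.sum_univ_four]
  refine ⟨b.repr.symm, ?_⟩
  ext v
  constructor
  · rintro ⟨⟨s, t⟩, rfl⟩
    refine ⟨!₂[1 / √2 * cos (√2 * s), 1 / √2 * sin (√2 * s), 1 / √2 * cos (√2 * t), 1 / √2 * sin (√2 * t)], ?_, ?_⟩
    · have p1 := Real.sin_sq_add_cos_sq (√2 * s)
      have p2 := Real.sin_sq_add_cos_sq (√2 * t)
      constructor
      · show (1 / √2 * cos (√2 * s))^2 + (1 / √2 * sin (√2 * s))^2 = 1/2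
        linear_combination (cos (√2 * s)^2 + sin (√2 * s)^2) * s2 + 1/2 * p1
      · show (1 / √2 * cos (√2 * t))^2 + (1 / √2 * sin (√2 * t))^2 = 1/2
        linear_combination (cos (√2 * t)^2 + sin (√2 * t)^2) * s2 + 1/2 * p2
    · rw [hQ, form]; rfl
  · rintro ⟨x, ⟨h1, h2⟩, rfl⟩
    obtain ⟨s, a, b⟩ := exists_angle h1
    obtain ⟨t, c, d⟩ := exists_angle h2
    refine ⟨(s, t), ?_⟩
    rw [hQ, form, a, b, c, d]
end final1

end part6

section part7

/-! ### Conformal minimal surfaces -/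

structure CM (F N : R2 → E4) (E : R2 → ℝ) : Prop where
  sF : Sm F
  sN : Sm N
  sE : Sm E
  Epos : ∀ p, 0 < E p
  FF : ∀ p, ⟪F p, F p⟫ = 1
  NN : ∀ p, ⟪N p, N p⟫ = 1
  FN : ∀ p, ⟪F p, N p⟫ = 0
  FX : ∀ p, ⟪F p, dd e1 F p⟫ = 0
  FY : ∀ p, ⟪F p, dd e2 F p⟫ = 0
  NX : ∀ p, ⟪N p, dd e1 F p⟫ = 0
  NY : ∀ p, ⟪N p, dd e2 F p⟫ = 0
  XX : ∀ p, ⟪dd e1 F p, dd e1 F p⟫ = E p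
  YY : ∀ p, ⟪dd e2 F p, dd e2 F p⟫ = E p
  XY : ∀ p, ⟪dd e1 F p, dd e2 F p⟫ = 0
  lapF : ∀ p, dd e1 (dd e1 F) p + dd e2 (dd e2 F) p = (-(2 * E p)) • F p
  emb : ∀ p q, F p = F q → ∀ r, F (r + (q - p)) = F r
  cpt : ∃ ρ : ℝ, ∀ x p : R2, ∃ l : R2, (∀ r, F (r + l) = F r) ∧ q2 (x + l) p ≤ ρ
  per : ∀ l, (∀ r, F (r + l) = F r) → ∀ r, N (r + l) = N r ∧ E (r + l) = E r

section cm
variable {F N : R2 → E4} {E : R2 → ℝ}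

def hh (F N : R2 → E4) (p : R2) : ℝ := ⟪dd e1 (dd e1 F) p, N p⟫
def kk (F N : R2 → E4) (p : R2) : ℝ := ⟪dd e1 (dd e2 F) p, N p⟫

namespace CM

lemma parseval (S : CM F N E) (p : R2) (u v : E4) :
    ⟪u, v⟫ = ⟪u, F p⟫ * ⟪v, F p⟫ + ⟪u, N p⟫ * ⟪v, N p⟫
      + (⟪u, dd e1 F p⟫ * ⟪v, dd e1 F p⟫ + ⟪u, dd e2 F p⟫ * ⟪v, dd e2 F p⟫) / E p :=
  frame_parseval (S.Epos p) (S.FF p) (S.NN p) (S.XX p) (S.YY p) (S.FN p) (S.FX p) (S.FY p)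
    (S.NX p) (S.NY p) (S.XY p) u v

lemma zero_of (S : CM F N E) (p : R2) (w : E4) (h1 : ⟪w, F p⟫ = 0) (h2 : ⟪w, N p⟫ = 0)
    (h3 : ⟪w, dd e1 F p⟫ = 0) (h4 : ⟪w, dd e2 F p⟫ = 0) : w = 0 := by
  have := S.parseval p w w
  rw [h1, h2, h3, h4] at this
  rw [← inner_self_eq_zero (𝕜 := ℝ), this]; simp

lemma comm21 (S : CM F N E) : dd e2 (dd e1 F) = dd e1 (dd e2 F) := dd_comm S.sF e2 e1

lemma i11_0 (S : CM F N E) (p : R2) : ⟪dd e1 (dd e1 F) p, F p⟫ = - E p := by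
  have h := dd_inner S.sF (S.sF.dd e1) e1 p
  rw [dd_const_of S.FX, S.XX, real_inner_comm (dd e1 (dd e1 F) p)] at h; linarith
lemma i22_0 (S : CM F N E) (p : R2) : ⟪dd e2 (dd e2 F) p, F p⟫ = - E p := by
  have h := dd_inner S.sF (S.sF.dd e2) e2 p
  rw [dd_const_of S.FY, S.YY, real_inner_comm (dd e2 (dd e2 F) p)] at h; linarith
lemma i12_0 (S : CM F N E) (p : R2) : ⟪dd e1 (dd e2 F) p, F p⟫ = 0 := by
  have h := dd_inner S.sF (S.sF.dd e2) e1 p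
  rw [dd_const_of S.FY, S.XY, real_inner_comm (dd e1 (dd e2 F) p)] at h; linarith
lemma i11_1 (S : CM F N E) (p : R2) : ⟪dd e1 (dd e1 F) p, dd e1 F p⟫ = dd e1 E p / 2 := by
  have h := dd_inner (S.sF.dd e1) (S.sF.dd e1) e1 p
  rw [dd_eq_const S.XX, real_inner_comm (dd e1 (dd e1 F) p)] at h; linarith
lemma i12_1 (S : CM F N E) (p : R2) : ⟪dd e1 (dd e2 F) p, dd e1 F p⟫ = dd e2 E p / 2 := by
  have h := dd_inner (S.sF.dd e1) (S.sF.dd e1) e2 p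
  rw [dd_eq_const S.XX, S.comm21, real_inner_comm (dd e1 (dd e2 F) p)] at h; linarith
lemma i12_2 (S : CM F N E) (p : R2) : ⟪dd e1 (dd e2 F) p, dd e2 F p⟫ = dd e1 E p / 2 := by
  have h := dd_inner (S.sF.dd e2) (S.sF.dd e2) e1 p
  rw [dd_eq_const S.YY, real_inner_comm (dd e1 (dd e2 F) p)] at h; linarith
lemma i22_2 (S : CM F N E) (p : R2) : ⟪dd e2 (dd e2 F) p, dd e2 F p⟫ = dd e2 E p / 2 := by
  have h := dd_inner (S.sF.dd e2) (S.sF.dd e2) e2 p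
  rw [dd_eq_const S.YY, real_inner_comm (dd e2 (dd e2 F) p)] at h; linarith
lemma i11_2 (S : CM F N E) (p : R2) : ⟪dd e1 (dd e1 F) p, dd e2 F p⟫ = - dd e2 E p / 2 := by
  have h := dd_inner (S.sF.dd e1) (S.sF.dd e2) e1 p
  rw [dd_const_of S.XY, real_inner_comm (dd e1 (dd e2 F) p), S.i12_1] at h; linarith
lemma i22_1 (S : CM F N E) (p : R2) : ⟪dd e2 (dd e2 F) p, dd e1 F p⟫ = - dd e1 E p / 2 := by
  have h := dd_inner (S.sF.dd e1) (S.sF.dd e2) e2 p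
  rw [dd_const_of S.XY, real_inner_comm (dd e2 (dd e2 F) p), S.comm21, S.i12_2] at h; linarith
lemma i22_N (S : CM F N E) (p : R2) : ⟪dd e2 (dd e2 F) p, N p⟫ = - hh F N p := by
  have h : ⟪dd e1 (dd e1 F) p + dd e2 (dd e2 F) p, N p⟫ = 0 := by
    rw [S.lapF, inner_smul_left, S.FN]; simp
  rw [inner_add_left] at h
  unfold hh; linarith

lemma XF (S : CM F N E) (p : R2) : ⟪dd e1 F p, F p⟫ = 0 := by rw [real_inner_comm]; exact S.FX p
lemma YF (S : CM F N E) (p : R2) : ⟪dd e2 F p, F p⟫ = 0 := by rw [real_inner_comm]; exact S.FY p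
lemma XN (S : CM F N E) (p : R2) : ⟪dd e1 F p, N p⟫ = 0 := by rw [real_inner_comm]; exact S.NX p
lemma YN (S : CM F N E) (p : R2) : ⟪dd e2 F p, N p⟫ = 0 := by rw [real_inner_comm]; exact S.NY p
lemma YX (S : CM F N E) (p : R2) : ⟪dd e2 F p, dd e1 F p⟫ = 0 := by rw [real_inner_comm]; exact S.XY p
lemma NF (S : CM F N E) (p : R2) : ⟪N p, F p⟫ = 0 := by rw [real_inner_comm]; exact S.FN p

lemma Nv_F (S : CM F N E) (p v : R2) : ⟪dd v N p, F p⟫ = 0 := by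
  have h := dd_inner S.sN S.sF v p
  rw [dd_const_of S.NF, dd_split F v p, inner_add_right, inner_smul_right, inner_smul_right, S.NX, S.NY] at h
  linarith
lemma Nv_N (S : CM F N E) (p v : R2) : ⟪dd v N p, N p⟫ = 0 := by
  have h := dd_inner S.sN S.sN v p
  rw [dd_const_of S.NN, real_inner_comm (dd v N p)] at h
  linarith
lemma Nv_X (S : CM F N E) (p v : R2) : ⟪dd v N p, dd e1 F p⟫ = - ⟪dd v (dd e1 F) p, N p⟫ := by
  have h := dd_inner S.sN (S.sF.dd e1) v p
  rw [dd_const_of S.NX, real_inner_comm (dd v (dd e1 F) p)] at h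
  linarith
lemma Nv_Y (S : CM F N E) (p v : R2) : ⟪dd v N p, dd e2 F p⟫ = - ⟪dd v (dd e2 F) p, N p⟫ := by
  have h := dd_inner S.sN (S.sF.dd e2) v p
  rw [dd_const_of S.NY, real_inner_comm (dd v (dd e2 F) p)] at h
  linarith

lemma N1 (S : CM F N E) (p : R2) :
    dd e1 N p = (-(hh F N p / E p)) • dd e1 F p + (-(kk F N p / E p)) • dd e2 F p := by
  have hE := (S.Epos p).ne'
  rw [← sub_eq_zero]
  apply S.zero_of p
  · simp only [inner_sub_left, inner_add_left, real_inner_smul_left, S.Nv_F, S.XF, S.YF]; ring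
  · simp only [inner_sub_left, inner_add_left, real_inner_smul_left, S.Nv_N, S.XN, S.YN]; ring
  · simp only [inner_sub_left, inner_add_left, real_inner_smul_left, S.Nv_X, S.XX, S.YX]
    unfold hh; field_simp; ring
  · simp only [inner_sub_left, inner_add_left, real_inner_smul_left, S.Nv_Y, S.XY, S.YY]
    unfold kk; field_simp; ring

lemma N2 (S : CM F N E) (p : R2) :
    dd e2 N p = (-(kk F N p / E p)) • dd e1 F p + (hh F N p / E p) • dd e2 F p := by
  have hE := (S.Epos p).ne'
  rw [← sub_eq_zero]
  apply S.zero_of p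
  · simp only [inner_sub_left, inner_add_left, real_inner_smul_left, S.Nv_F, S.XF, S.YF]; ring
  · simp only [inner_sub_left, inner_add_left, real_inner_smul_left, S.Nv_N, S.XN, S.YN]; ring
  · simp only [inner_sub_left, inner_add_left, real_inner_smul_left, S.Nv_X, S.XX, S.YX, S.comm21]
    unfold kk; field_simp; ring
  · simp only [inner_sub_left, inner_add_left, real_inner_smul_left, S.Nv_Y, S.XY, S.YY, S.i22_N]
    field_simp; ring

lemma sh (S : CM F N E) : Sm (hh F N) := ((S.sF.dd e1).dd e1).inner ℝ S.sN
lemma sk (S : CM F N E) : Sm (kk F N) := ((S.sF.dd e2).dd e1).inner ℝ S.sN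

lemma codazzi1 (S : CM F N E) (p : R2) : dd e2 (hh F N) p = dd e1 (kk F N) p := by
  have a := dd_inner ((S.sF.dd e1).dd e1) S.sN e2 p
  have b := dd_inner ((S.sF.dd e2).dd e1) S.sN e1 p
  have c : dd e2 (dd e1 (dd e1 F)) = dd e1 (dd e1 (dd e2 F)) := by
    rw [dd_comm (S.sF.dd e1) e2 e1, S.comm21]
  have a' : dd e2 (hh F N) p = _ := a
  have b' : dd e1 (kk F N) p = _ := b
  rw [a', b', c, S.N1, S.N2]
  simp only [inner_add_right, inner_smul_right, S.i11_1, S.i11_2, S.i12_1, S.i12_2]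
  ring

lemma codazzi2 (S : CM F N E) (p : R2) : dd e1 (hh F N) p = - dd e2 (kk F N) p := by
  have e : ∀ q, ⟪dd e2 (dd e2 F) q, N q⟫ = - hh F N q := S.i22_N
  have a := dd_inner ((S.sF.dd e2).dd e2) S.sN e1 p
  rw [dd_eq_const e, dd_neg] at a
  have b := dd_inner ((S.sF.dd e2).dd e1) S.sN e2 p
  have b' : dd e2 (kk F N) p = _ := b
  have c : dd e2 (dd e1 (dd e2 F)) = dd e1 (dd e2 (dd e2 F)) := dd_comm (S.sF.dd e2) e2 e1
  have a' := neg_eq_iff_eq_neg.1 a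
  rw [a', b', c, S.N1, S.N2]
  simp only [inner_add_right, inner_smul_right, S.i22_1, S.i22_2, S.i12_1, S.i12_2]
  ring

lemma gauss (S : CM F N E) (p : R2) : E p * (dd e1 (dd e1 E) p + dd e2 (dd e2 E) p)
    - ((dd e1 E p)^2 + (dd e2 E p)^2) = 2 * (hh F N p ^2 + kk F N p ^2) * E p - 2 * (E p)^3 := by
  have hE := (S.Epos p).ne'
  have s1 := S.sF.dd e1
  have s2 := S.sF.dd e2
  have c1 : dd e2 (dd e1 (dd e2 F)) = dd e1 (dd e2 (dd e2 F)) := dd_comm s2 e2 e1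
  -- second derivatives of E
  have g11 := dd_inner (s2.dd e1) s2 e1 p
  have g11' : dd e1 (fun q => dd e1 E q / 2) p = dd e1 (dd e1 E) p / 2 := by
    have := dd_mul (S.sE.dd e1) (contDiff_const (c := (1/2:ℝ))) e1 p
    rw [dd_const] at this
    have e : (fun q => dd e1 E q / 2) = fun q => dd e1 E q * (1/2) := funext fun q => by ring
    rw [e, this]; ring
  rw [dd_eq_const S.i12_2, g11'] at g11
  have g22 := dd_inner (s2.dd e1) s1 e2 p
  have g22' : dd e2 (fun q => dd e2 E q / 2) p = dd e2 (dd e2 E) p / 2 := by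
    have := dd_mul (S.sE.dd e2) (contDiff_const (c := (1/2:ℝ))) e2 p
    rw [dd_const] at this
    have e : (fun q => dd e2 E q / 2) = fun q => dd e2 E q * (1/2) := funext fun q => by ring
    rw [e, this]; ring
  rw [dd_eq_const S.i12_1, g22', c1, S.comm21] at g22
  have m := dd_inner (s2.dd e2) s1 e1 p
  have m' : ∀ q, ⟪dd e2 (dd e2 F) q, dd e1 F q⟫ = - ⟪dd e1 (dd e2 F) q, dd e2 F q⟫ := fun q => by
    rw [S.i22_1, S.i12_2]; ring
  have m2 := dd_inner (s2.dd e1) s2 e1 p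
  rw [dd_eq_const m', dd_neg, m2] at m
  have P1 := S.parseval p (dd e1 (dd e2 F) p) (dd e1 (dd e2 F) p)
  have P2 := S.parseval p (dd e2 (dd e2 F) p) (dd e1 (dd e1 F) p)
  rw [S.i12_0, S.i12_1, S.i12_2] at P1
  rw [S.i11_0, S.i11_1, S.i11_2, S.i22_0, S.i22_1, S.i22_2, S.i22_N] at P2
  have k' : ⟪dd e1 (dd e2 F) p, N p⟫ = kk F N p := rfl
  have h' : ⟪dd e1 (dd e1 F) p, N p⟫ = hh F N p := rfl
  rw [k'] at P1
  rw [h'] at P2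
  have key : (dd e1 (dd e1 E) p + dd e2 (dd e2 E) p) / 2
    = ⟪dd e1 (dd e2 F) p, dd e1 (dd e2 F) p⟫ - ⟪dd e2 (dd e2 F) p, dd e1 (dd e1 F) p⟫ := by
    linarith
  rw [P1, P2] at key
  field_simp at key
  linear_combination (1/2) * key

lemma lapN_aux (S : CM F N E) (h1 : ∀ p, hh F N p = 1) (h0 : ∀ p, kk F N p = 0) (p : R2) :
    dd e1 (dd e1 N) p + dd e2 (dd e2 N) p = (-(2 / E p)) • N p := by
  have hE := (S.Epos p).ne'
  have sI : Sm (fun q => (E q)⁻¹) := S.sE.inv fun q => (S.Epos q).ne'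
  have n1 : ∀ q, dd e1 N q = - ((E q)⁻¹ • dd e1 F q) := fun q => by
    rw [S.N1, h1, h0, one_div]; module
  have n2 : ∀ q, dd e2 N q = (E q)⁻¹ • dd e2 F q := fun q => by
    rw [S.N2, h1, h0, one_div]; module
  rw [dd_eq_const n1, dd_eq_const n2, dd_neg, dd_smul sI (S.sF.dd e1), dd_smul sI (S.sF.dd e2),
    dd_inv S.sE _ _ hE, dd_inv S.sE _ _ hE, ← sub_eq_zero]
  have h' : ⟪dd e1 (dd e1 F) p, N p⟫ = 1 := h1 p
  apply S.zero_of p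
  · simp only [inner_sub_left, inner_add_left, inner_neg_left, real_inner_smul_left, S.i11_0, S.i22_0,
      S.XF, S.YF, S.NF]; ring
  · simp only [inner_sub_left, inner_add_left, inner_neg_left, real_inner_smul_left, h', S.i22_N, h1,
      S.XN, S.YN, S.NN]; field_simp; ring
  · simp only [inner_sub_left, inner_add_left, inner_neg_left, real_inner_smul_left, S.i11_1, S.i22_1,
      S.XX, S.YX, S.NX]; field_simp; ring
  · simp only [inner_sub_left, inner_add_left, inner_neg_left, real_inner_smul_left, S.i11_2, S.i22_2,
      S.XY, S.YY, S.NY]; field_simp; ring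

lemma toNSurf (S : CM F N E) (h1 : ∀ p, hh F N p = 1) (h0 : ∀ p, kk F N p = 0) : NSurf F N E 1 where
  sF := S.sF
  sN := S.sN
  sE := S.sE
  hσ := by norm_num
  Epos := S.Epos
  FF := S.FF
  NN := S.NN
  FN := S.FN
  FX := S.FX
  FY := S.FY
  NX := S.NX
  NY := S.NY
  XX := S.XX
  YY := S.YY
  XY := S.XY
  h11 := h1
  h12 := h0
  h22 p := by rw [S.i22_N, h1]
  N1 p := by rw [S.N1, h1, h0]; module
  N2 p := by rw [S.N2, h1, h0]; module
  lapF := S.lapF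
  lapN := S.lapN_aux h1 h0
  gauss p := by rw [S.gauss, h1, h0]; ring
  emb := S.emb
  cpt := S.cpt
  per := S.per

end CM
end cm

end part7

section part8

lemma compact_q2 (ρ : ℝ) : IsCompact {p : R2 | q2 p 0 ≤ ρ} := by
  refine Metric.isCompact_of_isClosed_isBounded
    (isClosed_le (sm_q2 0).continuous continuous_const) ?_
  rw [Metric.isBounded_iff_subset_closedBall 0]
  refine ⟨|ρ| + 1, fun p hp => ?_⟩
  have hp' : p.1^2 + p.2^2 ≤ ρ := by simpa [q2] using hp
  have hρ := le_abs_self ρ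
  have hρ0 := abs_nonneg ρ
  rw [mem_closedBall_zero_iff, Prod.norm_def, Real.norm_eq_abs, Real.norm_eq_abs]
  refine max_le ?_ ?_ <;> apply abs_le_of_sq_le_sq <;> nlinarith [sq_nonneg p.1, sq_nonneg p.2]

lemma holo_const {u w : R2 → ℝ} (su : Sm u) (sw : Sm w) (c1 : ∀ p, dd e2 u p = dd e1 w p)
    (c2 : ∀ p, dd e1 u p = - dd e2 w p) (K : Set R2) (hK : IsCompact K)
    (hr : ∀ x, ∃ y ∈ K, u x = u y ∧ w x = w y) (p : R2) : u p = u 0 ∧ w p = w 0 := by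
  let A : ℂ →L[ℝ] R2 := Complex.equivRealProdCLM.toContinuousLinearMap
  have A1 : A 1 = e1 := by simp [A, Complex.equivRealProdCLM_apply]
  have AI : A Complex.I = e2 := by simp [A, Complex.equivRealProdCLM_apply]
  let φ : ℂ → ℂ := fun z => (u (A z) : ℂ) - Complex.I * (w (A z) : ℂ)
  have hd : Differentiable ℂ φ := by
    intro z
    have hu : HasFDerivAt (fun z => (u (A z) : ℂ)) (Complex.ofRealCLM.comp ((fderiv ℝ u (A z)).comp A)) z :=
      Complex.ofRealCLM.hasFDerivAt.comp z ((su.diff (A z)).hasFDerivAt.comp z A.hasFDerivAt)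
    have hw : HasFDerivAt (fun z => (w (A z) : ℂ)) (Complex.ofRealCLM.comp ((fderiv ℝ w (A z)).comp A)) z :=
      Complex.ofRealCLM.hasFDerivAt.comp z ((sw.diff (A z)).hasFDerivAt.comp z A.hasFDerivAt)
    have hφ := hu.sub (hw.const_mul Complex.I)
    have hφ' : HasFDerivAt φ _ z := hφ
    refine differentiableAt_complex_iff_differentiableAt_real.2 ⟨hφ'.differentiableAt, ?_⟩
    rw [hφ'.fderiv]
    have k1 : ((fderiv ℝ u (A z)) e2 : ℝ) = fderiv ℝ w (A z) e1 := c1 (A z)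
    have k2 : ((fderiv ℝ u (A z)) e1 : ℝ) = - fderiv ℝ w (A z) e2 := c2 (A z)
    simp only [sub_apply, ContinuousLinearMap.comp_apply, AI, A1,
      smul_apply, k1, k2, Complex.ofRealCLM_apply, smul_eq_mul]
    push_cast
    linear_combination (fderiv ℝ w (A z) e1 : ℂ) * Complex.I_mul_I
  have hb : Bornology.IsBounded (range φ) := by
    have hc : Continuous (fun q => (u q : ℂ) - Complex.I * (w q : ℂ)) := by
      have := su.continuous
      have := sw.continuous
      fun_prop
    refine (hK.image hc).isBounded.subset ?_
    rintro _ ⟨z, rfl⟩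
    obtain ⟨y, hy, h1, h2⟩ := hr (A z)
    exact ⟨y, hy, by simp only [φ, h1, h2]⟩
  have h := hd.apply_eq_apply_of_bounded hb (⟨p.1, p.2⟩ : ℂ) 0
  have e : A ⟨p.1, p.2⟩ = p := by simp [A, Complex.equivRealProdCLM_apply]
  have e0 : A 0 = 0 := map_zero A
  simp only [φ, e, e0] at h
  have h1 := congrArg Complex.re h
  have h2 := congrArg Complex.im h
  simp at h1 h2
  exact ⟨h1, h2⟩

def rot (a b : ℝ) : R2 →L[ℝ] R2 :=
  (a • ContinuousLinearMap.fst ℝ ℝ ℝ - b • ContinuousLinearMap.snd ℝ ℝ ℝ).prod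
    (b • ContinuousLinearMap.fst ℝ ℝ ℝ + a • ContinuousLinearMap.snd ℝ ℝ ℝ)

lemma rot_apply (a b : ℝ) (p : R2) : rot a b p = (a * p.1 - b * p.2, b * p.1 + a * p.2) := by
  simp [rot]

lemma rot_surj {a b : ℝ} (h : a^2 + b^2 ≠ 0) (q : R2) : ∃ p, rot a b p = q := by
  refine ⟨((a * q.1 + b * q.2) / (a^2 + b^2), (a * q.2 - b * q.1) / (a^2 + b^2)), ?_⟩
  rw [rot_apply]
  ext
  · simp only; field_simp; ring
  · simp only; field_simp; ring

section
variable {V : Type*} [NormedAddCommGroup V] [NormedSpace ℝ V]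

lemma dd_rot1 (a b : ℝ) {f : R2 → V} (hf : Sm f) (p : R2) :
    dd e1 (fun q => f (rot a b q)) p = a • dd e1 f (rot a b p) + b • dd e2 f (rot a b p) := by
  rw [dd_clm _ hf]; simp only []; rw [dd_split f (rot a b _)]; simp [rot_apply]
lemma dd_rot2 (a b : ℝ) {f : R2 → V} (hf : Sm f) (p : R2) :
    dd e2 (fun q => f (rot a b q)) p = (-b) • dd e1 f (rot a b p) + a • dd e2 f (rot a b p) := by
  rw [dd_clm _ hf]; simp only []; rw [dd_split f (rot a b _)]; simp [rot_apply]

lemma sm_rot (a b : ℝ) {f : R2 → V} (hf : Sm f) : Sm (fun q => f (rot a b q)) :=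
  ContDiff.comp hf (rot a b).contDiff

lemma dd_comb {f g : R2 → V} (a b : ℝ) (hf : Sm f) (hg : Sm g) (v p : R2) :
    dd v (fun q => a • f q + b • g q) p = a • dd v f p + b • dd v g p := by
  have h1 : Sm (fun q => a • f q) := contDiff_const.smul hf
  have h2 : Sm (fun q => b • g q) := contDiff_const.smul hg
  rw [dd_add h1 h2,
    dd_smul contDiff_const hf, dd_smul contDiff_const hg, dd_const, dd_const]
  module

lemma dd_rot11 (a b : ℝ) {f : R2 → V} (hf : Sm f) (p : R2) :
    dd e1 (dd e1 (fun q => f (rot a b q))) p = (a^2) • dd e1 (dd e1 f) (rot a b p)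
      + (2 * a * b) • dd e1 (dd e2 f) (rot a b p) + (b^2) • dd e2 (dd e2 f) (rot a b p) := by
  rw [dd_eq_const (dd_rot1 a b hf), dd_comb _ _ (sm_rot a b (hf.dd e1)) (sm_rot a b (hf.dd e2)),
    dd_rot1 a b (hf.dd e1), dd_rot1 a b (hf.dd e2), dd_comm hf e2 e1]
  module
lemma dd_rot22 (a b : ℝ) {f : R2 → V} (hf : Sm f) (p : R2) :
    dd e2 (dd e2 (fun q => f (rot a b q))) p = (b^2) • dd e1 (dd e1 f) (rot a b p)
      - (2 * a * b) • dd e1 (dd e2 f) (rot a b p) + (a^2) • dd e2 (dd e2 f) (rot a b p) := by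
  rw [dd_eq_const (dd_rot2 a b hf), dd_comb _ _ (sm_rot a b (hf.dd e1)) (sm_rot a b (hf.dd e2)),
    dd_rot2 a b (hf.dd e1), dd_rot2 a b (hf.dd e2), dd_comm hf e2 e1]
  module
lemma dd_rot12 (a b : ℝ) {f : R2 → V} (hf : Sm f) (p : R2) :
    dd e1 (dd e2 (fun q => f (rot a b q))) p = (-(a * b)) • dd e1 (dd e1 f) (rot a b p)
      + (a^2 - b^2) • dd e1 (dd e2 f) (rot a b p) + (a * b) • dd e2 (dd e2 f) (rot a b p) := by
  rw [dd_eq_const (dd_rot2 a b hf), dd_comb _ _ (sm_rot a b (hf.dd e1)) (sm_rot a b (hf.dd e2)),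
    dd_rot1 a b (hf.dd e1), dd_rot1 a b (hf.dd e2), dd_comm hf e2 e1]
  module
end

section cm2
variable {F N : R2 → E4} {E : R2 → ℝ}

lemma CM.rotate (S : CM F N E) {a b : ℝ} (h : 0 < a^2 + b^2) :
    CM (fun p => F (rot a b p)) (fun p => N (rot a b p)) (fun p => (a^2 + b^2) * E (rot a b p)) where
  sF := sm_rot a b S.sF
  sN := sm_rot a b S.sN
  sE := contDiff_const.mul (sm_rot a b S.sE)
  Epos p := mul_pos h (S.Epos _)
  FF p := S.FF _
  NN p := S.NN _
  FN p := S.FN _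
  FX p := by
    rw [dd_rot1 a b S.sF]; simp only [inner_add_right, inner_smul_right, S.FX, S.FY]; ring
  FY p := by
    rw [dd_rot2 a b S.sF]; simp only [inner_add_right, inner_smul_right, S.FX, S.FY]; ring
  NX p := by
    rw [dd_rot1 a b S.sF]; simp only [inner_add_right, inner_smul_right, S.NX, S.NY]; ring
  NY p := by
    rw [dd_rot2 a b S.sF]; simp only [inner_add_right, inner_smul_right, S.NX, S.NY]; ring
  XX p := by
    rw [dd_rot1 a b S.sF]
    simp only [inner_add_right, inner_smul_right, inner_add_left, real_inner_smul_left, S.XX, S.YY, S.XY, S.YX]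
    ring
  YY p := by
    rw [dd_rot2 a b S.sF]
    simp only [inner_add_right, inner_smul_right, inner_add_left, real_inner_smul_left, S.XX, S.YY, S.XY, S.YX]
    ring
  XY p := by
    rw [dd_rot1 a b S.sF, dd_rot2 a b S.sF]
    simp only [inner_add_right, inner_smul_right, inner_add_left, real_inner_smul_left, S.XX, S.YY, S.XY, S.YX]
    ring
  lapF p := by
    rw [dd_rot11 a b S.sF, dd_rot22 a b S.sF]
    have e : (-(2 * ((a^2+b^2) * E (rot a b p)))) • F (rot a b p)
      = (a^2+b^2) • ((-(2 * E (rot a b p))) • F (rot a b p)) := by module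
    rw [e, ← S.lapF]; module
  emb p q hpq r := by
    have := S.emb _ _ hpq (rot a b r)
    rw [map_add, map_sub]; exact this
  cpt := by
    obtain ⟨ρ, hρ⟩ := S.cpt
    refine ⟨ρ / (a^2 + b^2), fun x p => ?_⟩
    obtain ⟨l, hl, hl2⟩ := hρ (rot a b x) (rot a b p)
    obtain ⟨m, rfl⟩ := rot_surj h.ne' l
    refine ⟨m, fun r => by rw [map_add]; exact hl _, ?_⟩
    rw [le_div_iff₀ h]
    refine le_trans (le_of_eq ?_) hl2
    rw [← map_add]
    simp only [q2, rot_apply]; ring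
  per l hl r := by
    have := S.per (rot a b l) (fun q => by
      obtain ⟨q, rfl⟩ := rot_surj h.ne' q
      have := hl q
      rwa [map_add] at this) (rot a b r)
    rw [map_add]
    exact ⟨this.1, by rw [this.2]⟩

lemma CM.hk_const (S : CM F N E) (p : R2) : hh F N p = hh F N 0 ∧ kk F N p = kk F N 0 := by
  obtain ⟨ρ, hρ⟩ := S.cpt
  refine holo_const S.sh S.sk S.codazzi1 S.codazzi2 _ (compact_q2 ρ) (fun x => ?_) p
  obtain ⟨l, hl, hl2⟩ := hρ x 0
  have n := (S.per l hl x).1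
  refine ⟨x + l, hl2, ?_, ?_⟩
  · unfold hh
    rw [n, dd_shift _ l (fun r => dd_shift F l hl e1 r)]
  · unfold kk
    rw [n, dd_shift _ l (fun r => dd_shift F l hl e2 r)]

lemma CM.hk_ne (S : CM F N E) : ¬ (hh F N 0 = 0 ∧ kk F N 0 = 0) := by
  rintro ⟨h0, k0⟩
  obtain ⟨ρ, hρ⟩ := S.cpt
  obtain ⟨l0, _, hl0⟩ := hρ 0 0
  obtain ⟨x, hx, hmin⟩ := (compact_q2 ρ).exists_isMinOn ⟨0 + l0, hl0⟩ S.sE.continuous.continuousOn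
  have hm : ∀ y, E x ≤ E y := by
    intro y
    obtain ⟨l, hl, hl2⟩ := hρ y 0
    rw [← (S.per l hl y).2]
    exact hmin hl2
  have g := S.gauss x
  rw [(S.hk_const x).1, (S.hk_const x).2, h0, k0] at g
  have D : ∀ v, dd v E x = 0 ∧ 0 ≤ dd v (dd v E) x := by
    intro v
    have := second_deriv_nonneg (dd_line S.sE x v) (dd_line (S.sE.dd v) x v 0) (fun τ => by simpa using hm _)
    simpa using this
  rw [(D e1).1, (D e2).1] at g
  have hE := S.Epos x
  have h3 : 0 < E x ^ 3 := by positivity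
  have := mul_nonneg hE.le (add_nonneg (D e1).2 (D e2).2)
  linarith

lemma CM.clifford (S : CM F N E) : ∃ Q : E4 ≃ₗᵢ[ℝ] E4, range F = Q '' cliffordTorus := by
  set z : ℂ := ⟨hh F N 0, - kk F N 0⟩ with hz
  have hz0 : z ≠ 0 := by
    intro h
    apply S.hk_ne
    have h1 := congrArg Complex.re h
    have h2 := congrArg Complex.im h
    simp [hz] at h1 h2
    exact ⟨h1, h2⟩
  obtain ⟨μ, hμ⟩ := IsAlgClosed.exists_pow_nat_eq (z⁻¹) (n := 2) (by norm_num)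
  have hμ2 : μ * μ * z = 1 := by rw [← sq, hμ, inv_mul_cancel₀ hz0]
  have hμ0 : μ ≠ 0 := by
    rintro rfl
    simp at hμ2
  set a := μ.re with ha
  set b := μ.im with hb
  have hab : 0 < a^2 + b^2 := by
    have := Complex.normSq_pos.2 hμ0
    rw [Complex.normSq_apply] at this
    rw [ha, hb]; nlinarith
  have r1 := congrArg Complex.re hμ2
  have r2 := congrArg Complex.im hμ2
  simp only [Complex.mul_re, Complex.mul_im, hz, Complex.one_re, Complex.one_im, ← ha, ← hb] at r1 r2
  have T := S.rotate hab
  have H := T.toNSurf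
    (fun p => by
      unfold hh
      rw [dd_rot11 a b S.sF]
      have hk := S.hk_const (rot a b p)
      have h1 : ⟪dd e1 (dd e1 F) (rot a b p), N (rot a b p)⟫ = hh F N 0 := hk.1
      have h2 : ⟪dd e1 (dd e2 F) (rot a b p), N (rot a b p)⟫ = kk F N 0 := hk.2
      simp only [inner_add_left, real_inner_smul_left, h1, h2, S.i22_N, hk.1]
      linarith)
    (fun p => by
      unfold kk
      rw [dd_rot12 a b S.sF]
      have hk := S.hk_const (rot a b p)
      have h1 : ⟪dd e1 (dd e1 F) (rot a b p), N (rot a b p)⟫ = hh F N 0 := hk.1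
      have h2 : ⟪dd e1 (dd e2 F) (rot a b p), N (rot a b p)⟫ = kk F N 0 := hk.2
      simp only [inner_add_left, real_inner_smul_left, h1, h2, S.i22_N, hk.1]
      linarith)
  obtain ⟨Q, hQ⟩ := H.clifford
  refine ⟨Q, ?_⟩
  rw [← hQ]
  ext v
  constructor
  · rintro ⟨q, rfl⟩
    obtain ⟨p, rfl⟩ := rot_surj hab.ne' q
    exact ⟨p, rfl⟩
  · rintro ⟨p, rfl⟩
    exact ⟨_, rfl⟩
end cm2

end part8

def det3 (a b c : E4) (i j k : Fin 4) : ℝ :=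
  a i * (b j * c k - b k * c j) - a j * (b i * c k - b k * c i) + a k * (b i * c j - b j * c i)

def cross (a b c : E4) : E4 := !₂[det3 a b c 1 2 3, - det3 a b c 0 2 3, det3 a b c 0 1 3, - det3 a b c 0 1 2]

lemma inner4 (u v : E4) : ⟪u, v⟫ = u 0 * v 0 + u 1 * v 1 + u 2 * v 2 + u 3 * v 3 := by
  simp [PiLp.inner_apply, Fin.sum_univ_four]; ring

lemma cross0 (a b c : E4) : cross a b c 0 = det3 a b c 1 2 3 := rfl
lemma cross1 (a b c : E4) : cross a b c 1 = - det3 a b c 0 2 3 := rfl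
lemma cross2 (a b c : E4) : cross a b c 2 = det3 a b c 0 1 3 := rfl
lemma cross3 (a b c : E4) : cross a b c 3 = - det3 a b c 0 1 2 := rfl

lemma inner_cross_a (a b c : E4) : ⟪a, cross a b c⟫ = 0 := by
  rw [inner4, cross0, cross1, cross2, cross3]; unfold det3; ring
lemma inner_cross_b (a b c : E4) : ⟪b, cross a b c⟫ = 0 := by
  rw [inner4, cross0, cross1, cross2, cross3]; unfold det3; ring
lemma inner_cross_c (a b c : E4) : ⟪c, cross a b c⟫ = 0 := by
  rw [inner4, cross0, cross1, cross2, cross3]; unfold det3; ring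
lemma inner_cross_cross (a b c : E4) : ⟪cross a b c, cross a b c⟫ =
    ⟪a, a⟫ * (⟪b, b⟫ * ⟪c, c⟫ - ⟪b, c⟫^2) - ⟪a, b⟫ * (⟪a, b⟫ * ⟪c, c⟫ - ⟪b, c⟫ * ⟪a, c⟫)
      + ⟪a, c⟫ * (⟪a, b⟫ * ⟪b, c⟫ - ⟪b, b⟫ * ⟪a, c⟫) := by
  simp only [inner4, cross0, cross1, cross2, cross3]; unfold det3; ring

lemma sm_cross {f g h : R2 → E4} (hf : Sm f) (hg : Sm g) (hh : Sm h) :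
    Sm (fun p => cross (f p) (g p) (h p)) := by
  have cf := contDiff_euclidean.1 hf
  have cg := contDiff_euclidean.1 hg
  have ch := contDiff_euclidean.1 hh
  have cd : ∀ i j k, Sm (fun p => det3 (f p) (g p) (h p) i j k) := by
    intro i j k
    have a1 := cf i
    have a2 := cf j
    have a3 := cf k
    have b1 := cg i
    have b2 := cg j
    have b3 := cg k
    have c1 := ch i
    have c2 := ch j
    have c3 := ch k
    exact ((a1.mul ((b2.mul c3).sub (b3.mul c2))).sub (a2.mul ((b1.mul c3).sub (b3.mul c1)))).add
      (a3.mul ((b1.mul c2).sub (b2.mul c1)))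
  refine contDiff_euclidean.2 fun i => ?_
  fin_cases i
  · exact cd 1 2 3
  · exact (cd 0 2 3).neg
  · exact cd 0 1 3
  · exact (cd 0 1 2).neg

lemma CM.make {F : R2 → E4} {E : R2 → ℝ} (sF : Sm F) (Epos : ∀ p, 0 < E p)
    (FF : ∀ p, ⟪F p, F p⟫ = 1)
    (XX : ∀ p, ⟪dd e1 F p, dd e1 F p⟫ = E p)
    (YY : ∀ p, ⟪dd e2 F p, dd e2 F p⟫ = E p)
    (XY : ∀ p, ⟪dd e1 F p, dd e2 F p⟫ = 0)
    (lapF : ∀ p, dd e1 (dd e1 F) p + dd e2 (dd e2 F) p = (-(2 * E p)) • F p)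
    (emb : ∀ p q, F p = F q → ∀ r, F (r + (q - p)) = F r)
    (cpt : ∃ ρ : ℝ, ∀ x p : R2, ∃ l : R2, (∀ r, F (r + l) = F r) ∧ q2 (x + l) p ≤ ρ) :
    CM F (fun p => (E p)⁻¹ • cross (F p) (dd e1 F p) (dd e2 F p)) E := by
  have s1 := sF.dd e1
  have s2 := sF.dd e2
  have FV : ∀ v p, ⟪F p, dd v F p⟫ = 0 := fun v p => by
    have h := dd_inner sF sF v p
    rw [dd_const_of FF, real_inner_comm] at h
    linarith
  have sE : Sm E := by
    have : E = fun p => ⟪dd e1 F p, dd e1 F p⟫ := funext fun p => (XX p).symm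
    rw [this]; exact s1.inner ℝ s1
  have sI : Sm (fun q => (E q)⁻¹) := sE.inv fun q => (Epos q).ne'
  exact {
    sF := sF
    sN := sI.smul (sm_cross sF s1 s2)
    sE := sE
    Epos := Epos
    FF := FF
    NN := fun p => by
      have := (Epos p).ne'
      rw [inner_smul_right, real_inner_smul_left, inner_cross_cross, FF, XX, YY, XY, FV, FV]
      field_simp; ring
    FN := fun p => by rw [inner_smul_right, inner_cross_a, mul_zero]
    FX := FV e1
    FY := FV e2
    NX := fun p => by rw [real_inner_smul_left, real_inner_comm, inner_cross_b, mul_zero]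
    NY := fun p => by rw [real_inner_smul_left, real_inner_comm, inner_cross_c, mul_zero]
    XX := XX
    YY := YY
    XY := XY
    lapF := lapF
    emb := emb
    cpt := cpt
    per := fun l hl r => by
      have h1 := dd_shift F l hl e1 r
      have h2 := dd_shift F l hl e2 r
      have hE : E (r + l) = E r := by rw [← XX, ← XX, h1]
      exact ⟨by rw [hE, h1, h2, hl], hE⟩ }

lemma deriv_e1 {g : R2 → E4} (hg : Sm g) (s t : ℝ) : deriv (fun u => g (u, t)) s = dd e1 g (s, t) := by
  have h1 : HasDerivAt (fun u : ℝ => (u, t)) e1 s := (hasDerivAt_id s).prodMk (hasDerivAt_const s t)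
  exact ((hg.diff (s, t)).hasFDerivAt.comp_hasDerivAt s h1).deriv
lemma deriv_e2 {g : R2 → E4} (hg : Sm g) (s t : ℝ) : deriv (fun u => g (s, u)) t = dd e2 g (s, t) := by
  have h1 : HasDerivAt (fun u : ℝ => (s, u)) e2 t := (hasDerivAt_const t s).prodMk (hasDerivAt_id t)
  exact ((hg.diff (s, t)).hasFDerivAt.comp_hasDerivAt t h1).deriv

lemma det_ne {v w : R2} (h : LinearIndependent ℝ ![v, w]) : v.1 * w.2 - v.2 * w.1 ≠ 0 := by
  rw [LinearIndependent.pair_iff] at h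
  intro h0
  have a := h w.2 (-v.2) (by ext <;> simp <;> linarith)
  have b := h w.1 (-v.1) (by ext <;> simp <;> linarith)
  have c := h 1 0 (by
    ext
    · simp; linarith [b.2]
    · simp; linarith [a.2])
  simp at c

lemma lattice_cpt {v w : R2} (h : LinearIndependent ℝ ![v, w]) :
    ∃ ρ : ℝ, ∀ x p : R2, ∃ m n : ℤ, q2 (x + (m • v + n • w)) p ≤ ρ := by
  have hd := det_ne h
  refine ⟨(|v.1| + |w.1|)^2 + (|v.2| + |w.2|)^2, fun x p => ?_⟩
  obtain ⟨α, hα⟩ : ∃ α, α = ((p.1 - x.1) * w.2 - (p.2 - x.2) * w.1) / (v.1 * w.2 - v.2 * w.1) := ⟨_, rfl⟩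
  obtain ⟨β, hβ⟩ : ∃ β, β = (v.1 * (p.2 - x.2) - v.2 * (p.1 - x.1)) / (v.1 * w.2 - v.2 * w.1) := ⟨_, rfl⟩
  have d1 : p.1 - x.1 = α * v.1 + β * w.1 := by rw [hα, hβ, div_mul_eq_mul_div, div_mul_eq_mul_div, ← add_div, eq_div_iff hd]; ring
  have d2 : p.2 - x.2 = α * v.2 + β * w.2 := by rw [hα, hβ, div_mul_eq_mul_div, div_mul_eq_mul_div, ← add_div, eq_div_iff hd]; ring
  have fa := Int.self_sub_floor α
  have fb := Int.self_sub_floor β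
  have bd : ∀ c d : ℝ, (Int.fract α * c + Int.fract β * d)^2 ≤ (|c| + |d|)^2 := by
    intro c d
    apply sq_le_sq.2
    rw [abs_of_nonneg (by positivity : 0 ≤ |c| + |d|)]
    refine (abs_add_le _ _).trans ?_
    rw [abs_mul, abs_mul, abs_of_nonneg (Int.fract_nonneg α), abs_of_nonneg (Int.fract_nonneg β)]
    have a1 := mul_le_mul_of_nonneg_right (Int.fract_lt_one α).le (abs_nonneg c)
    have a2 := mul_le_mul_of_nonneg_right (Int.fract_lt_one β).le (abs_nonneg d)
    linarith
  refine ⟨⌊α⌋, ⌊β⌋, ?_⟩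
  have k1 : (x + (⌊α⌋ • v + ⌊β⌋ • w)).1 - p.1 = - (Int.fract α * v.1 + Int.fract β * w.1) := by
    simp; linear_combination -d1 - v.1 * fa - w.1 * fb
  have k2 : (x + (⌊α⌋ • v + ⌊β⌋ • w)).2 - p.2 = - (Int.fract α * v.2 + Int.fract β * w.2) := by
    simp; linear_combination -d2 - v.2 * fa - w.2 * fb
  unfold q2
  rw [k1, k2, neg_sq, neg_sq]
  exact add_le_add (bd _ _) (bd _ _)

/-- **Lawson's conjecture (Brendle's theorem)**: let `Λ ⊂ ℝ²` be a lattice spanned by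
two linearly independent vectors and let `F : ℝ² → S³ ⊂ ℝ⁴` be a smooth `Λ`-periodic
conformal immersion satisfying the minimal surface (harmonic map) equation
`ΔF + (|∂F/∂s|² + |∂F/∂t|²)F = 0`, and which is embedded, i.e. `F(p) = F(q)` implies
`p - q ∈ Λ`.  Then `F` is congruent to the Clifford torus: there is an orthogonal
transformation `Q ∈ O(4)` with `F(ℝ²) = Q ⬝ {x ∈ S³ : x₁² + x₂² = x₃² + x₄² = 1/2}`. -/
theorem lawson_conjecture
    (v₁ v₂ : ℝ × ℝ) (hindep : LinearIndependent ℝ ![v₁, v₂])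
    (Λ : Set (ℝ × ℝ)) (hΛ : Λ = {w : ℝ × ℝ | ∃ m n : ℤ, w = m • v₁ + n • v₂})
    (F : ℝ → ℝ → E4)
    (hsm : ContDiff ℝ (⊤ : ℕ∞) (fun p : ℝ × ℝ => F p.1 p.2))
    (hsphere : ∀ s t : ℝ, ‖F s t‖ = 1)
    (hper : ∀ s t : ℝ, ∀ w ∈ Λ, F (s + w.1) (t + w.2) = F s t)
    (hconf : ∀ s t : ℝ, ‖pds F s t‖ = ‖pdt F s t‖ ∧ 0 < ‖pds F s t‖ ∧
      ⟪pds F s t, pdt F s t⟫ = 0)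
    (hmin : ∀ s t : ℝ,
      lap F s t + (‖pds F s t‖ ^ 2 + ‖pdt F s t‖ ^ 2) • F s t = 0)
    (hemb : ∀ s t s' t' : ℝ, F s t = F s' t' → ((s', t') - (s, t) : ℝ × ℝ) ∈ Λ) :
    ∃ Q : E4 ≃ₗᵢ[ℝ] E4,
      range (fun p : ℝ × ℝ => F p.1 p.2) = Q '' cliffordTorus := by
  set f : R2 → E4 := fun p => F p.1 p.2 with hf
  have sf : Sm f := hsm
  have p1 : ∀ s t, pds F s t = dd e1 f (s, t) := fun s t => deriv_e1 sf s t
  have p2 : ∀ s t, pdt F s t = dd e2 f (s, t) := fun s t => deriv_e2 sf s t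
  have pl : ∀ s t, lap F s t = dd e1 (dd e1 f) (s, t) + dd e2 (dd e2 f) (s, t) := fun s t => by
    unfold lap
    simp only [p1, p2]
    rw [deriv_e1 (sf.dd e1), deriv_e2 (sf.dd e2)]
  simp only [p1, p2, pl] at hconf hmin
  have per : ∀ w ∈ Λ, ∀ r, f (r + w) = f r := fun w hw r => hper r.1 r.2 w hw
  have S := CM.make (E := fun p => ‖dd e1 f p‖^2) sf
    (fun p => by have := (hconf p.1 p.2).2.1; positivity)
    (fun p => by rw [real_inner_self_eq_norm_sq, hf, hsphere]; norm_num)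
    (fun p => by rw [real_inner_self_eq_norm_sq])
    (fun p => by rw [real_inner_self_eq_norm_sq, (hconf p.1 p.2).1])
    (fun p => (hconf p.1 p.2).2.2)
    (fun p => by
      have h := hmin p.1 p.2
      rw [← (hconf p.1 p.2).1] at h
      rw [eq_neg_of_add_eq_zero_left h, ← neg_smul]
      congr 1; ring)
    (fun p q hpq r => per _ (hemb p.1 p.2 q.1 q.2 hpq) r)
    (by
      obtain ⟨ρ, hρ⟩ := lattice_cpt hindep
      refine ⟨ρ, fun x p => ?_⟩
      obtain ⟨m, n, h⟩ := hρ x p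
      exact ⟨m • v₁ + n • v₂, per _ (by rw [hΛ]; exact ⟨m, n, rfl⟩), h⟩)
  exact S.clifford
end
end
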